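/- arXiv:2112.07420 — 9 statements merged into one kernel-verified Lean document; each statement's English description precedes it below -/
import Mathlib

section
/- Let A ⊆ B be a C*-inclusion and F ⊆ A⁺ a subset of the positive cone of A. Then F residually supports B if and only if for every induced ideal J of B the image of F in B/J supports B/J, i.e. for every b ∈ B⁺ with b ∉ J there is a ∈ F with a ∉ J such that for every ε > 0 there is x ∈ B with dist(a − x* b x, J) < ε. -/
/- Common definitions for C*-inclusions, ideals, Cuntz subequivalence,
   supporting/filling families and pure infiniteness. -/

namespace KM

variable {B : Type*} [NonUnitalCStarAlgebra B] [PartialOrder B]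

/-- `J` is a closed two-sided ideal of the C*-algebra `C` (given as a subset of `B`). -/
def IsIdealIn (C J : Set B) : Prop :=
  J ⊆ C ∧ IsClosed J ∧ (0 : B) ∈ J ∧ (∀ x ∈ J, ∀ y ∈ J, x + y ∈ J) ∧
    (∀ (c : ℂ), ∀ x ∈ J, c • x ∈ J) ∧ (∀ x ∈ J, ∀ c ∈ C, c * x ∈ J ∧ x * c ∈ J)

/-- `J` is a closed two-sided ideal of `B`. -/
def IsIdeal (J : Set B) : Prop := IsIdealIn Set.univ J

/-- `A` is a C*-subalgebra of `B`: a closed `*`-subalgebra. -/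
def IsSubCStar (A : Set B) : Prop :=
  IsClosed A ∧ (0 : B) ∈ A ∧ (∀ x ∈ A, ∀ y ∈ A, x + y ∈ A) ∧
    (∀ (c : ℂ), ∀ x ∈ A, c • x ∈ A) ∧ (∀ x ∈ A, ∀ y ∈ A, x * y ∈ A) ∧
    (∀ x ∈ A, star x ∈ A)

/-- The smallest closed two-sided ideal of the C*-algebra `C` containing `S`. -/
def idealGenIn (C S : Set B) : Set B := ⋂₀ {J : Set B | IsIdealIn C J ∧ S ⊆ J}

/-- The smallest closed two-sided ideal of `B` containing `S`; for an ideal `I` of a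
subalgebra `A` this is the induced ideal `BIB`. -/
def idealGen (S : Set B) : Set B := idealGenIn Set.univ S

/-- `I` is a restricted ideal of the subalgebra `A`, i.e. `I = J ∩ A` for an ideal `J` of `B`. -/
def IsRestricted (A I : Set B) : Prop := ∃ J : Set B, IsIdeal J ∧ I = J ∩ A

/-- `J` is an induced ideal of `B`: `J = BIB` for some ideal `I` of `A`. -/
def IsInduced (A J : Set B) : Prop := ∃ I : Set B, IsIdealIn A I ∧ J = idealGen I

/-- `A` separates ideals in `B`. -/
def SeparatesIdeals (A : Set B) : Prop :=
  ∀ J₁ J₂ : Set B, IsIdeal J₁ → IsIdeal J₂ → J₁ ∩ A = J₂ ∩ A → J₁ = J₂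

/-- Cuntz subequivalence `a ≼ b`. -/
def CuntzBelow (a b : B) : Prop :=
  ∀ ε : ℝ, 0 < ε → ∃ x : B, ‖a - star x * b * x‖ < ε

/-- `F` supports `B`. -/
def Supports (F : Set B) : Prop :=
  ∀ b : B, 0 ≤ b → b ≠ 0 → ∃ a ∈ F, a ≠ 0 ∧ CuntzBelow a b

/-- `F` residually supports the C*-algebra `C ⊆ B`: for every ideal `J` of `C`, the image
of `F` in `C/J` supports `C/J`, phrased concretely via the distance to `J`. -/
def ResiduallySupportsIn (C F : Set B) : Prop :=
  ∀ J : Set B, IsIdealIn C J → ∀ b ∈ C, 0 ≤ b → b ∉ J →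
    ∃ a ∈ F, a ∉ J ∧ ∀ ε : ℝ, 0 < ε → ∃ x ∈ C,
      Metric.infDist (a - star x * b * x) J < ε

/-- `F` residually supports `B`. -/
def ResiduallySupports (F : Set B) : Prop := ResiduallySupportsIn Set.univ F

/-- `x` lies in `aB = {a c : c ∈ B}`. -/
def MemRightMul (a x : B) : Prop := ∃ c : B, x = a * c

/-- `a` is properly infinite in `B`. -/
def ProperlyInfinite (a : B) : Prop :=
  ∀ ε : ℝ, 0 < ε → ∃ x y : B, MemRightMul a x ∧ MemRightMul a y ∧
    ‖star x * x - a‖ ≤ ε ∧ ‖star y * y - a‖ ≤ ε ∧ ‖star x * y‖ ≤ ε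

/-- `a` is infinite in `B`. -/
def InfiniteElt (a : B) : Prop :=
  ∃ b : B, 0 ≤ b ∧ b ≠ 0 ∧ ∀ ε : ℝ, 0 < ε → ∃ x y : B,
    MemRightMul a x ∧ MemRightMul a y ∧
    ‖star x * x - a‖ ≤ ε ∧ ‖star y * y - b‖ ≤ ε ∧ ‖star x * y‖ ≤ ε

/-- The pair `a, b` is separated in `B`. -/
def SeparatedPair (a b : B) : Prop :=
  ∀ ε : ℝ, 0 < ε → ∃ x y : B, MemRightMul a x ∧ MemRightMul b y ∧
    ‖star x * x - a‖ ≤ ε ∧ ‖star y * y - b‖ ≤ ε ∧ ‖star x * y‖ ≤ ε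

/-- A character of `B`: a nonzero multiplicative linear functional `B → ℂ`. -/
def IsCharacter (φ : B →ₗ[ℂ] ℂ) : Prop :=
  (∀ x y : B, φ (x * y) = φ x * φ y) ∧ φ ≠ 0

/-- `B` is purely infinite: it admits no characters and for nonzero positive `a, b`,
`a ≼ b` iff `a` lies in the ideal generated by `b`. -/
def PurelyInfinite (B : Type*) [NonUnitalCStarAlgebra B] [PartialOrder B] : Prop :=
  (¬ ∃ φ : B →ₗ[ℂ] ℂ, IsCharacter φ) ∧
    ∀ a b : B, 0 ≤ a → a ≠ 0 → 0 ≤ b → b ≠ 0 → (CuntzBelow a b ↔ a ∈ idealGen {b})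

/-- `p` is a projection. -/
def IsProjection (p : B) : Prop := star p = p ∧ p * p = p

/-- `B` has the ideal property: projections separate ideals. -/
def IdealProperty (B : Type*) [NonUnitalCStarAlgebra B] [PartialOrder B] : Prop :=
  ∀ J₁ J₂ : Set B, IsIdeal J₁ → IsIdeal J₂ →
    (∀ p : B, IsProjection p → (p ∈ J₁ ↔ p ∈ J₂)) → J₁ = J₂

/-- `B` is strongly purely infinite: every pair of positive elements is separated. -/
def StronglyPurelyInfinite (B : Type*) [NonUnitalCStarAlgebra B] [PartialOrder B] : Prop :=
  ∀ a b : B, 0 ≤ a → 0 ≤ b → SeparatedPair a b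

/-- `D` is a hereditary C*-subalgebra of `B`. -/
def IsHereditary (D : Set B) : Prop :=
  IsSubCStar D ∧ ∀ b d : B, d ∈ D → 0 ≤ b → b ≤ d → b ∈ D

/-- `F` fills `B`. -/
def Fills (F : Set B) : Prop :=
  ∀ D : Set B, IsHereditary D → (∃ d ∈ D, d ≠ 0) →
    ∀ J : Set B, IsIdeal J → ¬ D ⊆ J →
      ∃ z : B, z ∉ J ∧ z * star z ∈ D ∧ star z * z ∈ F

/-- Closed linear span of a subset of `B`. -/
def closSpan (S : Set B) : Set B := closure ↑(Submodule.span ℂ S)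

/-- The C*-inclusion `A ⊆ B` is symmetric. -/
def SymmetricInclusion (A : Set B) : Prop :=
  ∀ I : Set B, IsRestricted A I →
    closSpan {z : B | ∃ x ∈ I, ∃ b : B, z = x * b} =
      closSpan {z : B | ∃ b : B, ∃ x ∈ I, z = b * x}

/-- `b` is a normaliser of `A` in `B`. -/
def IsNormalizer (A : Set B) (b : B) : Prop :=
  (∀ a ∈ A, b * a * star b ∈ A) ∧ (∀ a ∈ A, star b * a * b ∈ A)

/-- The inclusion `A ⊆ B` is nondegenerate: the closed span of `A·B` is `B`. -/
def Nondegenerate (A : Set B) : Prop :=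
  closSpan {z : B | ∃ a ∈ A, ∃ b : B, z = a * b} = Set.univ

/-- The inclusion `A ⊆ B` is regular: nondegenerate and `B` is the closed linear span of
the normalisers of `A`. -/
def RegularInclusion (A : Set B) : Prop :=
  Nondegenerate A ∧ closSpan {b : B | IsNormalizer A b} = Set.univ

end KM

open KM

variable {B : Type*} [NonUnitalCStarAlgebra B] [PartialOrder B] [StarOrderedRing B]



lemma aux_real (δ : ℝ) (hδ : 0 < δ) (t : ℝ) (ht : 0 ≤ t) :
    |t - t * (t / (t ^ 2 + δ ^ 2)) * t - (t / (t ^ 2 + δ ^ 2)) * t * t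
      + (t / (t ^ 2 + δ ^ 2)) * t * t * (t / (t ^ 2 + δ ^ 2)) * t| ≤ δ := by
  have hp : 0 < t ^ 2 + δ ^ 2 := by positivity
  have h : t - t * (t / (t ^ 2 + δ ^ 2)) * t - (t / (t ^ 2 + δ ^ 2)) * t * t
      + (t / (t ^ 2 + δ ^ 2)) * t * t * (t / (t ^ 2 + δ ^ 2)) * t
      = t * δ ^ 4 / (t ^ 2 + δ ^ 2) ^ 2 := by
    field_simp
    ring
  rw [h, abs_of_nonneg (by positivity), div_le_iff₀ (by positivity)]
  have h1 : t * δ ≤ t ^ 2 + δ ^ 2 := by nlinarith [sq_nonneg (t - δ)]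
  have h2 : δ ^ 2 ≤ t ^ 2 + δ ^ 2 := by nlinarith [sq_nonneg t]
  have h3 : (t * δ) * δ ^ 2 ≤ (t ^ 2 + δ ^ 2) * (t ^ 2 + δ ^ 2) := by gcongr
  nlinarith

lemma aux_approx {B : Type*} [NonUnitalCStarAlgebra B] [PartialOrder B] [StarOrderedRing B]
    (x : B) (δ : ℝ) (hδ : 0 < δ) :
    ∃ g : B, ‖x - x * (g * (star x * x))‖ ^ 2 ≤ δ := by
  set h := star x * x with hh
  have hpos : 0 ≤ h := star_mul_self_nonneg x
  have hsa : IsSelfAdjoint h := .of_nonneg hpos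
  have hc : Continuous (fun t : ℝ => t / (t ^ 2 + δ ^ 2)) :=
    continuous_id.div (by fun_prop) (fun t => by positivity)
  let f : ℝ → ℝ := fun t => t / (t ^ 2 + δ ^ 2)
  have hf0 : f 0 = 0 := by simp [f]
  have hfc : ContinuousOn f (quasispectrum ℝ h) := hc.continuousOn
  refine ⟨cfcₙ f h, ?_⟩
  set g := cfcₙ f h with hg
  have hgs : star g = g := (cfcₙ_predicate f h : IsSelfAdjoint g).star_eq
  have hid : h = cfcₙ (fun t : ℝ => t) h := (cfcₙ_id' ℝ h).symm
  have key : star (x - x * (g * h)) * (x - x * (g * h))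
      = h - h * g * h - h * g * h + h * g * h * g * h := by
    simp only [star_sub, star_mul, hgs, hsa.star_eq]
    simp only [sub_mul, mul_sub]
    have e1 : star x * (x * (g * h)) = h * g * h := by simp only [hh, mul_assoc]
    have e2 : h * g * star x * x = h * g * h := by simp only [hh, mul_assoc]
    have e3 : h * g * star x * (x * (g * h)) = h * g * h * g * h := by simp only [hh, mul_assoc]
    rw [e1, e2, e3]
    abel
  have hcomm : h * g = g * h := (cfcₙ_commute_cfcₙ (fun t : ℝ => t) f h |>.eq) |> fun e => by
    rwa [← hid] at e
  rw [sq, ← CStarRing.norm_star_mul_self, key]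
  have c2 : h * g * h = cfcₙ (fun t : ℝ => t * f t * t) h := by
    rw [cfcₙ_mul (fun t : ℝ => t * f t) (fun t => t) h (by fun_prop) (by simp) (by fun_prop) rfl,
      cfcₙ_mul (fun t : ℝ => t) f h (by fun_prop) rfl hfc hf0, ← hid]
  have c3 : h * g * h * g * h = cfcₙ (fun t : ℝ => t * f t * t * f t * t) h := by
    rw [cfcₙ_mul (fun t : ℝ => t * f t * t * f t) (fun t => t) h (by fun_prop) (by simp)
        (by fun_prop) rfl,
      cfcₙ_mul (fun t : ℝ => t * f t * t) f h (by fun_prop) (by simp) hfc hf0, ← c2, ← hid]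
  have c4 : h - h * g * h - h * g * h + h * g * h * g * h =
      cfcₙ (fun t : ℝ => t - t * f t * t - t * f t * t + t * f t * t * f t * t) h := by
    rw [cfcₙ_add (fun t : ℝ => t - t * f t * t - t * f t * t) (fun t => t * f t * t * f t * t) h
        (by fun_prop) (by simp) (by fun_prop) (by simp),
      cfcₙ_sub (fun t : ℝ => t - t * f t * t) (fun t => t * f t * t) h
        (by fun_prop) (by simp) (by fun_prop) (by simp),
      cfcₙ_sub (fun t : ℝ => t) (fun t => t * f t * t) h
        (by fun_prop) (by simp) (by fun_prop) (by simp), ← c2, ← c3, ← hid]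
  rw [c4]
  refine norm_cfcₙ_le fun t ht => ?_
  have ht0 : 0 ≤ t := quasispectrum_nonneg_of_nonneg h hpos t ht
  have := aux_real δ hδ t ht0
  rw [Real.norm_eq_abs]
  convert this using 2
  simp only [f]
  ring

lemma aux_mem {B : Type*} [NonUnitalCStarAlgebra B] [PartialOrder B] [StarOrderedRing B]
    (J : Set B) (hJ : IsIdeal J) (x : B) (hx : star x * x ∈ J) : x ∈ J := by
  obtain ⟨-, hcl, -, -, -, hmul⟩ := hJ
  rw [← hcl.closure_eq, Metric.mem_closure_iff]
  intro ε hε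
  obtain ⟨g, hg⟩ := aux_approx x (ε ^ 2 / 2) (by positivity)
  refine ⟨x * (g * (star x * x)), (hmul _ (hmul _ hx g trivial).1 x trivial).1, ?_⟩
  rw [dist_eq_norm]
  refine lt_of_pow_lt_pow_left₀ 2 hε.le ?_
  nlinarith [sq_pos_of_pos hε]

lemma aux_gen {B : Type*} [NonUnitalCStarAlgebra B] (S : Set B) : IsIdeal (idealGen S) := by
  refine ⟨Set.subset_univ _, isClosed_sInter fun J hJ => hJ.1.2.1, fun J hJ => hJ.1.2.2.1,
    fun x hx y hy J hJ => hJ.1.2.2.2.1 x (hx J hJ) y (hy J hJ),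
    fun c x hx J hJ => hJ.1.2.2.2.2.1 c x (hx J hJ),
    fun x hx c hc => ⟨fun J hJ => (hJ.1.2.2.2.2.2 x (hx J hJ) c hc).1,
      fun J hJ => (hJ.1.2.2.2.2.2 x (hx J hJ) c hc).2⟩⟩

/-- A family `F ⊆ A⁺` residually supports `B` iff for every induced ideal `J = BIB` of `B`
the image of `F` supports `B/J`. -/
theorem stmt6 (A : Set B) (hA : IsSubCStar A)
    (F : Set B) (hFA : F ⊆ {a : B | a ∈ A ∧ 0 ≤ a}) :
    ResiduallySupports F ↔
      ∀ I : Set B, IsIdealIn A I → ∀ b : B, 0 ≤ b → b ∉ idealGen I →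
        ∃ a ∈ F, a ∉ idealGen I ∧ ∀ ε : ℝ, 0 < ε → ∃ x : B,
          Metric.infDist (a - star x * b * x) (idealGen I) < ε := by
  constructor
  · intro h I _ b hb hbI
    obtain ⟨a, haF, haI, h2⟩ := h _ (aux_gen I) b trivial hb hbI
    refine ⟨a, haF, haI, fun ε hε => ?_⟩
    obtain ⟨x, -, hx⟩ := h2 ε hε
    exact ⟨x, hx⟩
  · intro h J hJ
    have hJ' := hJ
    obtain ⟨-, hcl, h0, hadd, hsmul, hmul⟩ := hJ'
    obtain ⟨Acl, A0, Aadd, Asmul, Amul, -⟩ := hA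
    have hI : IsIdealIn A (J ∩ A) := by
      refine ⟨Set.inter_subset_right, hcl.inter Acl, ⟨h0, A0⟩,
        fun x hx y hy => ⟨hadd x hx.1 y hy.1, Aadd x hx.2 y hy.2⟩,
        fun c x hx => ⟨hsmul c x hx.1, Asmul c x hx.2⟩,
        fun x hx c hc => ⟨⟨(hmul x hx.1 c trivial).1, Amul c hc x hx.2⟩,
          ⟨(hmul x hx.1 c trivial).2, Amul x hx.2 c hc⟩⟩⟩
    have hsub : idealGen (J ∩ A) ⊆ J := fun x hx => hx J ⟨hJ, Set.inter_subset_left⟩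
    have hgen := aux_gen (J ∩ A)
    have heq : J = idealGen (J ∩ A) := by
      refine Set.Subset.antisymm (fun y hy => ?_) hsub
      refine aux_mem _ hgen y ?_
      by_contra hb
      obtain ⟨a, haF, haI, h2⟩ := h _ hI _ (star_mul_self_nonneg y) hb
      apply haI
      have haJ : a ∈ J := by
        rw [← hcl.closure_eq, Metric.mem_closure_iff]
        intro ε hε
        obtain ⟨x, hx⟩ := h2 ε hε
        obtain ⟨z, hz, hd⟩ := (Metric.infDist_lt_iff ⟨0, hgen.2.2.1⟩).1 hx
        refine ⟨z + star x * (star y * y) * x, hadd _ (hsub hz) _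
          (hmul _ (hmul _ (hmul y hy (star y) trivial).1 (star x) trivial).1 x trivial).2, ?_⟩
        rw [dist_eq_norm] at hd ⊢
        convert hd using 2
        abel
      intro K hK
      exact hK.2 ⟨haJ, (hFA haF).1⟩
    intro b _ hb hbJ
    rw [heq] at hbJ
    obtain ⟨a, haF, haI, h2⟩ := h _ hI b hb hbJ
    rw [← heq] at haI h2
    refine ⟨a, haF, haI, fun ε hε => ?_⟩
    obtain ⟨x, hx⟩ := h2 ε hε
    exact ⟨x, trivial, hx⟩
end

section
/- Let B be a C*-algebra. If the set of projections of B residually supports B, then B has the ideal property. Conversely, if B is purely infinite and has the ideal property, then the set of projections of B residually supports B. -/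
open KM

variable {B : Type*} [NonUnitalCStarAlgebra B] [PartialOrder B] [StarOrderedRing B]


theorem mem_of_star_mul_self_mem_aux {B : Type*} [NonUnitalCStarAlgebra B] [PartialOrder B]
    [StarOrderedRing B] {J : Set B} (hJ : IsIdeal J) (x : B) (hx : star x * x ∈ J) : x ∈ J := by
  obtain ⟨-, hcl, -, -, -, hmul⟩ := hJ
  rw [← hcl.closure_eq, Metric.mem_closure_iff]
  intro δ hδ
  obtain ⟨e, he, heδ⟩ : ∃ e : ℝ, 0 < e ∧ e < δ ^ 2 := exists_between (by positivity)
  set a := star x * x with ha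
  have ha0 : 0 ≤ a := star_mul_self_nonneg x
  have has : IsSelfAdjoint a := ha0.isSelfAdjoint
  let h : ℝ → ℝ := fun t => t / (e ^ 2 + t ^ 2)
  have hpos : ∀ t : ℝ, 0 < e ^ 2 + t ^ 2 := fun t => by positivity
  have hc : Continuous h := by
    apply Continuous.div (by fun_prop) (by fun_prop)
    intro t; exact (hpos t).ne'
  have h0 : h 0 = 0 := by simp [h]
  let k := cfcₙ h a
  let g := a * k
  refine ⟨x * g, (hmul _ ((hmul _ hx k trivial).2) x trivial).1, ?_⟩
  rw [dist_eq_norm]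
  have hg : g = cfcₙ (fun t => t * h t) a := by
    simp only [g, k]
    rw [cfcₙ_mul (fun t => t) h a (by fun_prop) rfl (by fun_prop) h0, cfcₙ_id' ℝ a has]
  have hgs : star g = g := by
    rw [hg]; exact (cfcₙ_predicate (fun t : ℝ => t * h t) a : IsSelfAdjoint _)
  have key : star (x - x * g) * (x - x * g) = cfcₙ (fun t => t - t * (t * h t) - ((t * h t) * t - (t * h t) * (t * (t * h t)))) a := by
    have e1 : star (x - x * g) * (x - x * g) = a - a * g - (g * a - g * (a * g)) := by
      rw [star_sub, star_mul, hgs, ha]; noncomm_ring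
    have hid : a = cfcₙ (fun t : ℝ => t) a := (cfcₙ_id' ℝ a has).symm
    have hag : a * g = cfcₙ (fun t => t * (t * h t)) a := by
      rw [cfcₙ_mul (fun t => t) (fun t => t * h t) a (by fun_prop) rfl (by fun_prop) (by simp), ← hg, ← hid]
    have hga : g * a = cfcₙ (fun t => (t * h t) * t) a := by
      rw [cfcₙ_mul (fun t => t * h t) (fun t => t) a (by fun_prop) (by simp) (by fun_prop) rfl, ← hg, ← hid]
    have hgag : g * (a * g) = cfcₙ (fun t => (t * h t) * (t * (t * h t))) a := by
      rw [cfcₙ_mul (fun t => t * h t) (fun t => t * (t * h t)) a (by fun_prop) (by simp) (by fun_prop) (by simp), ← hg, ← hag]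
    rw [e1, cfcₙ_sub (fun t => t - t * (t * h t)) _ a (by fun_prop) (by simp) (by fun_prop) (by simp),
      cfcₙ_sub (fun t => t) _ a (by fun_prop) rfl (by fun_prop) (by simp),
      cfcₙ_sub (fun t => (t * h t) * t) _ a (by fun_prop) (by simp) (by fun_prop) (by simp),
      ← hag, ← hga, ← hgag, ← hid]
  have hb : ‖star (x - x * g) * (x - x * g)‖ ≤ e := by
    rw [key]
    refine norm_cfcₙ_le (fun t _ => ?_)
    have hp := hpos t
    have : t - t * (t * h t) - ((t * h t) * t - (t * h t) * (t * (t * h t)))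
        = t * e ^ 4 / (e ^ 2 + t ^ 2) ^ 2 := by
      simp only [h]; field_simp; ring
    rw [this, Real.norm_eq_abs, abs_div, abs_mul, abs_of_pos (by positivity : 0 < e ^ 4),
      abs_of_pos (by positivity : 0 < (e ^ 2 + t ^ 2) ^ 2), div_le_iff₀ (by positivity)]
    have h1 : |t| * e ≤ e ^ 2 + t ^ 2 := by
      nlinarith [sq_nonneg (|t| - e), sq_abs t, abs_nonneg t]
    have h2 : e ^ 2 ≤ e ^ 2 + t ^ 2 := by nlinarith [sq_nonneg t]
    calc |t| * e ^ 4 = e * ((|t| * e) * e ^ 2) := by ring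
      _ ≤ e * ((e ^ 2 + t ^ 2) * (e ^ 2 + t ^ 2)) := by gcongr
      _ = _ := by ring
  rw [CStarRing.norm_star_mul_self] at hb
  nlinarith [norm_nonneg (x - x * g)]

theorem ideal_subset_aux {B : Type*} [NonUnitalCStarAlgebra B] [PartialOrder B]
    [StarOrderedRing B] (hR : ResiduallySupports {p : B | IsProjection p})
    {J₁ J₂ : Set B} (h₁ : IsIdeal J₁) (h₂ : IsIdeal J₂)
    (hp : ∀ p : B, IsProjection p → p ∈ J₁ → p ∈ J₂) : J₁ ⊆ J₂ := by
  intro x hx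
  by_contra hx2
  have hb1 : star x * x ∈ J₁ := (h₁.2.2.2.2.2 x hx _ trivial).1
  have hb2 : star x * x ∉ J₂ := fun h => hx2 (mem_of_star_mul_self_mem_aux h₂ x h)
  have hI : IsIdeal (J₁ ∩ J₂) := by
    obtain ⟨-, a1, a2, a3, a4, a5⟩ := h₁
    obtain ⟨-, b1, b2, b3, b4, b5⟩ := h₂
    exact ⟨Set.subset_univ _, a1.inter b1, ⟨a2, b2⟩,
      fun x hx y hy => ⟨a3 x hx.1 y hy.1, b3 x hx.2 y hy.2⟩,
      fun c x hx => ⟨a4 c x hx.1, b4 c x hx.2⟩,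
      fun x hx c hc => ⟨⟨(a5 x hx.1 c hc).1, (b5 x hx.2 c hc).1⟩,
        ⟨(a5 x hx.1 c hc).2, (b5 x hx.2 c hc).2⟩⟩⟩
  obtain ⟨p, hpp, hpn, hpa⟩ := hR _ hI (star x * x) trivial (star_mul_self_nonneg x)
    (fun h => hb2 h.2)
  have hp1 : p ∈ J₁ := by
    rw [← h₁.2.1.closure_eq, Metric.mem_closure_iff]
    intro δ hδ
    obtain ⟨y, -, hy⟩ := hpa δ hδ
    obtain ⟨j, hj, hjd⟩ := (Metric.infDist_lt_iff ⟨0, hI.2.2.1⟩).1 hy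
    refine ⟨star y * (star x * x) * y + j, h₁.2.2.2.1 _ ?_ _ hj.1, ?_⟩
    · exact (h₁.2.2.2.2.2 _ (h₁.2.2.2.2.2 _ hb1 (star y) trivial).1 y trivial).2
    · rwa [dist_eq_norm, sub_sub, ← dist_eq_norm] at hjd
  exact hpn ⟨hp1, hp p hpp hp1⟩

theorem idealGen_isIdeal_aux {B : Type*} [NonUnitalCStarAlgebra B] [PartialOrder B]
    (S : Set B) : IsIdeal (idealGen S) := by
  refine ⟨Set.subset_univ _, isClosed_sInter fun J hJ => hJ.1.2.1, fun J hJ => hJ.1.2.2.1,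
    fun x hx y hy J hJ => hJ.1.2.2.2.1 x (hx J hJ) y (hy J hJ),
    fun c x hx J hJ => hJ.1.2.2.2.2.1 c x (hx J hJ),
    fun x hx c hc => ⟨fun J hJ => (hJ.1.2.2.2.2.2 x (hx J hJ) c hc).1,
      fun J hJ => (hJ.1.2.2.2.2.2 x (hx J hJ) c hc).2⟩⟩

theorem residually_aux {B : Type*} [NonUnitalCStarAlgebra B] [PartialOrder B]
    [StarOrderedRing B] (hP : PurelyInfinite B) (hI : IdealProperty B) :
    ResiduallySupports {p : B | IsProjection p} := by
  intro J hJ b _ hb0 hbJ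
  have hG := idealGen_isIdeal_aux ({b} : Set B)
  have hbG : b ∈ idealGen ({b} : Set B) := fun K hK => hK.2 rfl
  have hInt : IsIdeal (idealGen ({b} : Set B) ∩ J) := by
    obtain ⟨-, a1, a2, a3, a4, a5⟩ := hG
    obtain ⟨-, b1, b2, b3, b4, b5⟩ := hJ
    exact ⟨Set.subset_univ _, a1.inter b1, ⟨a2, b2⟩,
      fun x hx y hy => ⟨a3 x hx.1 y hy.1, b3 x hx.2 y hy.2⟩,
      fun c x hx => ⟨a4 c x hx.1, b4 c x hx.2⟩,
      fun x hx c hc => ⟨⟨(a5 x hx.1 c hc).1, (b5 x hx.2 c hc).1⟩,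
        ⟨(a5 x hx.1 c hc).2, (b5 x hx.2 c hc).2⟩⟩⟩
  obtain ⟨p, hp, hpG, hpJ⟩ : ∃ p : B, IsProjection p ∧ p ∈ idealGen ({b} : Set B) ∧ p ∉ J := by
    by_contra! hcon
    have := hI _ _ hG hInt fun p hp => ⟨fun h => ⟨h, hcon p hp h⟩, fun h => h.1⟩
    exact hbJ (this ▸ hbG : b ∈ idealGen ({b} : Set B) ∩ J).2
  have hp0 : p ≠ 0 := fun h => hpJ (h ▸ hJ.2.2.1)
  have hb : b ≠ 0 := fun h => hbJ (h ▸ hJ.2.2.1)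
  have hpp : 0 ≤ p := by
    have := star_mul_self_nonneg p
    rwa [hp.1, hp.2] at this
  refine ⟨p, hp, hpJ, fun ε hε => ?_⟩
  obtain ⟨x, hx⟩ := (hP.2 p b hpp hp0 hb0 hb).2 hpG ε hε
  refine ⟨x, trivial, lt_of_le_of_lt (Metric.infDist_le_dist_of_mem hJ.2.2.1) ?_⟩
  rwa [dist_zero_right]

/-- If the projections of `B` residually support `B`, then `B` has the ideal property;
conversely a purely infinite C*-algebra with the ideal property is residually supported by
its projections. -/
theorem stmt7 :
    (ResiduallySupports {p : B | IsProjection p} → IdealProperty B) ∧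
    (PurelyInfinite B → IdealProperty B →
      ResiduallySupports {p : B | IsProjection p}) := by
  exact ⟨fun h J₁ J₂ h₁ h₂ hp => Set.Subset.antisymm
      (ideal_subset_aux h h₁ h₂ fun p hpp => (hp p hpp).1)
      (ideal_subset_aux h h₂ h₁ fun p hpp => (hp p hpp).2),
    fun hP hI => residually_aux hP hI⟩
end

section
/- Let B be a C*-algebra. If F ⊆ B⁺ fills B, then F residually supports B. -/
open KM

variable {B : Type*} [NonUnitalCStarAlgebra B] [PartialOrder B] [StarOrderedRing B]



open scoped CStarAlgebra in
lemma unital_bound {A : Type*} [CStarAlgebra A] [PartialOrder A] [StarOrderedRing A]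
    (z d : A) (hz : z * star z ≤ d) (ε : ℝ) (hε : 0 < ε) :
    ∃ v : A, ‖z - d * (v * z)‖ ^ 2 ≤ ε := by
  have hd : 0 ≤ d := (mul_star_self_nonneg z).trans hz
  have hsp : ∀ t ∈ spectrum ℝ d, 0 ≤ t := fun t ht => spectrum_nonneg_of_nonneg hd ht
  have hc : ContinuousOn (fun t : ℝ => 1 / (t + ε)) (spectrum ℝ d) := by
    apply ContinuousOn.div (by fun_prop) (by fun_prop)
    intro t ht
    have := hsp t ht
    positivity
  have hcw : ContinuousOn (fun t : ℝ => ε / (t + ε)) (spectrum ℝ d) := by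
    apply ContinuousOn.div (by fun_prop) (by fun_prop)
    intro t ht
    have := hsp t ht
    positivity
  have hsa : IsSelfAdjoint d := .of_nonneg hd
  let w : A := cfc (fun t : ℝ => ε / (t + ε)) d
  have hwsa : IsSelfAdjoint w := cfc_predicate _ d
  have hw : w = 1 - d * cfc (fun t : ℝ => 1 / (t + ε)) d := by
    have h1 : d * cfc (fun t : ℝ => 1 / (t + ε)) d
        = cfc (fun t : ℝ => t * (1 / (t + ε))) d := by
      rw [cfc_mul (fun t : ℝ => t) (fun t : ℝ => 1 / (t + ε)) d (by fun_prop) hc, cfc_id' ℝ d]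
    rw [h1, ← cfc_one ℝ d, ← cfc_sub _ _ d (by fun_prop) (by fun_prop)]
    apply cfc_congr
    intro t ht
    have := hsp t ht
    have : t + ε ≠ 0 := by positivity
    simp only [Pi.one_apply]
    field_simp
    ring
  have hwd : ‖w * d * w‖ ≤ ε := by
    have h1 : w * d * w
        = cfc (fun t : ℝ => ε / (t + ε) * t * (ε / (t + ε))) d := by
      rw [cfc_mul (fun t : ℝ => ε / (t + ε) * t) _ d (by fun_prop) hcw,
        cfc_mul _ (fun t : ℝ => t) d hcw (by fun_prop), cfc_id' ℝ d]
    rw [h1]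
    apply norm_cfc_le hε.le
    intro t ht
    have := hsp t ht
    rw [Real.norm_of_nonneg (by positivity)]
    have h2 : 0 < t + ε := by positivity
    rw [div_mul_eq_mul_div, div_mul_div_comm, div_le_iff₀ (by positivity)]
    nlinarith [mul_nonneg this hε.le, mul_pos hε hε, mul_nonneg this this,
      mul_nonneg hε.le (mul_nonneg this this), mul_pos hε (mul_pos hε hε),
      mul_nonneg this (mul_pos hε hε).le]
  refine ⟨cfc (fun t : ℝ => 1 / (t + ε)) d, ?_⟩
  have h3 : z - d * (cfc (fun t : ℝ => 1 / (t + ε)) d * z) = w * z := by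
    rw [hw, sub_mul, one_mul, mul_assoc]
  rw [h3, sq, ← CStarRing.norm_self_mul_star]
  refine le_trans (CStarAlgebra.norm_le_norm_of_nonneg_of_le (mul_star_self_nonneg _) ?_) hwd
  have := star_right_conjugate_le_conjugate hz w
  rw [hwsa.star_eq] at this
  simpa [mul_assoc, hwsa.star_eq] using this

open scoped CStarAlgebra in
lemma right_ideal_mem (R : Set B) (hcl : IsClosed R) (hR : ∀ x ∈ R, ∀ y, x * y ∈ R)
    (z d : B) (hd : d ∈ R) (hz : z * star z ≤ d) : z ∈ R := by
  rw [← hcl.closure_eq, Metric.mem_closure_iff]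
  intro ε hε
  have hz' : (z : Unitization ℂ B) * star (z : Unitization ℂ B) ≤ (d : Unitization ℂ B) := by
    rw [← sub_nonneg] at hz ⊢
    have := Unitization.inr_nonneg_iff.2 hz
    simpa using this
  obtain ⟨v, hv⟩ := unital_bound _ _ hz' (ε ^ 2 / 2) (by positivity)
  have hy : v * (z : Unitization ℂ B) = ((v * (z : Unitization ℂ B)).snd : B) := by
    ext <;> simp
  set y := (v * (z : Unitization ℂ B)).snd
  refine ⟨d * y, hR _ hd _, ?_⟩
  rw [hy, ← Unitization.inr_mul, ← Unitization.inr_sub, Unitization.norm_inr] at hv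
  rw [dist_eq_norm]
  apply lt_of_pow_lt_pow_left₀ 2 hε.le
  nlinarith [pow_pos hε 2]

/-- If `F ⊆ B⁺` fills `B`, then it residually supports `B`. -/
theorem stmt9 (F : Set B) (hF : ∀ a ∈ F, 0 ≤ a) (hfill : Fills F) :
    ResiduallySupports F := by
  intro J hJ b _ hb hbJ
  let R : Set B := closure (Set.range fun y => b * y)
  have hRcl : IsClosed R := isClosed_closure
  have hRmul : ∀ x ∈ R, ∀ y, x * y ∈ R := by
    intro x hx y
    refine map_mem_closure (f := fun x => x * y) (by fun_prop) hx ?_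
    rintro _ ⟨c, rfl⟩
    exact ⟨c * y, by simp [mul_assoc]⟩
  have hRadd : ∀ x ∈ R, ∀ y ∈ R, x + y ∈ R := by
    intro x hx y hy
    refine map_mem_closure₂ (f := fun x y : B => x + y) (by fun_prop) hx hy ?_
    rintro _ ⟨c, rfl⟩ _ ⟨e, rfl⟩
    exact ⟨c + e, by simp [mul_add]⟩
  have hRsmul : ∀ (c : ℂ), ∀ x ∈ R, c • x ∈ R := by
    intro k x hx
    refine map_mem_closure (f := fun x => k • x) (by fun_prop) hx ?_
    rintro _ ⟨c, rfl⟩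
    exact ⟨k • c, mul_smul_comm k b c⟩
  have hR0 : (0 : B) ∈ R := subset_closure ⟨0, by simp⟩
  have hbsa : star b = b := (IsSelfAdjoint.of_nonneg hb).star_eq
  have hbR : b ∈ R := right_ideal_mem R hRcl hRmul b (b * b) (subset_closure ⟨b, rfl⟩)
    (by rw [hbsa])
  let D : Set B := {d | d ∈ R ∧ star d ∈ R}
  have hD : IsHereditary D := by
    refine ⟨⟨?_, ?_, ?_, ?_, ?_, ?_⟩, ?_⟩
    · exact hRcl.inter (hRcl.preimage continuous_star)
    · exact ⟨hR0, by simpa using hR0⟩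
    · intro x hx y hy
      exact ⟨hRadd _ hx.1 _ hy.1, by rw [star_add]; exact hRadd _ hx.2 _ hy.2⟩
    · intro c x hx
      exact ⟨hRsmul _ _ hx.1, by rw [star_smul]; exact hRsmul _ _ hx.2⟩
    · intro x hx y hy
      exact ⟨hRmul _ hx.1 _, by rw [star_mul]; exact hRmul _ hy.2 _⟩
    · intro x hx
      exact ⟨hx.2, by simpa using hx.1⟩
    · intro x d hd hx hxd
      have hs : star x = x := (IsSelfAdjoint.of_nonneg hx).star_eq
      have hsq : CFC.sqrt x * CFC.sqrt x = x := CFC.sqrt_mul_sqrt_self x hx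
      have hss : star (CFC.sqrt x) = CFC.sqrt x :=
        (IsSelfAdjoint.of_nonneg (CFC.sqrt_nonneg x)).star_eq
      have h1 : CFC.sqrt x ∈ R := right_ideal_mem R hRcl hRmul _ d hd.1 (by rwa [hss, hsq])
      have h2 : x ∈ R := by
        have := hRmul _ h1 (CFC.sqrt x)
        rwa [hsq] at this
      exact ⟨h2, by rwa [hs]⟩
  have hbD : b ∈ D := ⟨hbR, by rwa [hbsa]⟩
  obtain ⟨z, hzJ, hzD, hzF⟩ := hfill D hD ⟨b, hbD, fun h => hbJ (h ▸ hJ.2.2.1)⟩ J hJ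
    (fun h => hbJ (h hbD))
  have hzR : z ∈ R := right_ideal_mem R hRcl hRmul z _ hzD.1 le_rfl
  refine ⟨star z * z, hzF, ?_, ?_⟩
  · intro h
    apply hzJ
    have := right_ideal_mem {x : B | star x ∈ J} (hJ.2.1.preimage continuous_star)
      (fun x hx y => by
        change star (x * y) ∈ J
        rw [star_mul]
        exact (hJ.2.2.2.2.2 _ hx (star y) trivial).1)
      (star z) (star z * z) (by simpa using h) (by simp)
    simpa using this
  · intro ε hε
    have hcont : Continuous (fun x : B => ‖star z * z - star x * x‖) := by fun_prop
    obtain ⟨_, hlt, y, rfl⟩ := mem_closure_iff.1 hzR {x | ‖star z * z - star x * x‖ < ε}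
      (isOpen_lt hcont continuous_const) (by simpa using hε)
    have hsq : CFC.sqrt b * CFC.sqrt b = b := CFC.sqrt_mul_sqrt_self b hb
    have hss : star (CFC.sqrt b) = CFC.sqrt b :=
      (IsSelfAdjoint.of_nonneg (CFC.sqrt_nonneg b)).star_eq
    refine ⟨CFC.sqrt b * y, trivial, ?_⟩
    refine lt_of_le_of_lt (Metric.infDist_le_dist_of_mem hJ.2.2.1) ?_
    rw [dist_zero_right]
    have hlt' : ‖star z * z - star (b * y) * (b * y)‖ < ε := hlt
    have h4 : CFC.sqrt b * b * CFC.sqrt b = b * b := by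
      have h5 : ∀ s : B, s * (s * s) * s = (s * s) * (s * s) := fun s => by
        simp only [mul_assoc]
      have := h5 (CFC.sqrt b)
      rwa [hsq] at this
    have h6 : star (CFC.sqrt b * y) * b * (CFC.sqrt b * y) = star (b * y) * (b * y) := by
      simp only [star_mul, hss, hbsa]
      calc star y * CFC.sqrt b * b * (CFC.sqrt b * y)
          = star y * (CFC.sqrt b * b * CFC.sqrt b) * y := by simp only [mul_assoc]
        _ = _ := by rw [h4]; simp only [mul_assoc]
    rw [h6]
    exact hlt'
end

section
/- Let Ω be a locally compact Hausdorff space, let B = C₀(Ω) be the C*-algebra of continuous complex-valued functions on Ω vanishing at infinity, and let F ⊆ B⁺ be a set of nonnegative functions in B. The following are equivalent: (1) F fills B; (2) F residually supports B; (3) the open supports {ω ∈ Ω : a(ω) > 0}, for a ∈ F, form a basis for the topology of Ω. -/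
open KM
open scoped ZeroAtInfty ComplexOrder

variable {Ω : Type*} [TopologicalSpace Ω] [LocallyCompactSpace Ω] [T2Space Ω]

/-- The canonical (pointwise) partial order on `C₀(Ω, ℂ)`; it coincides with the
C*-algebraic order on `C₀(Ω, ℂ)`. -/
noncomputable instance : PartialOrder C₀(Ω, ℂ) where
  le f g := ∀ ω : Ω, f ω ≤ g ω
  le_refl f ω := le_refl _
  le_trans f g h hfg hgh ω := le_trans (hfg ω) (hgh ω)
  le_antisymm f g hfg hgf := DFunLike.ext f g fun ω => le_antisymm (hfg ω) (hgf ω)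


namespace KMaux

variable {X : Type*} [TopologicalSpace X]

theorem exists_mk (f : C₀(X, ℂ)) (g : X → ℂ) (hg : Continuous g) (φ : ℝ → ℝ)
    (hφ : Continuous φ) (h0 : φ 0 = 0) (hb : ∀ ω, ‖g ω‖ ≤ φ ‖f ω‖) :
    ∃ z : C₀(X, ℂ), ∀ ω, z ω = g ω := by
  refine ⟨⟨⟨g, hg⟩, ?_⟩, fun ω => rfl⟩
  apply squeeze_zero_norm hb
  have h1 : Filter.Tendsto (fun ω => ‖f ω‖) (Filter.cocompact X) (nhds 0) := by
    simpa using (zero_at_infty f).norm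
  have h2 := (hφ.tendsto 0).comp h1
  rw [h0] at h2
  exact h2

theorem exists_bump [LocallyCompactSpace X] [T2Space X] (U : Set X) (hU : IsOpen U) (ω₀ : X)
    (h : ω₀ ∈ U) : ∃ b : C₀(X, ℂ), 0 ≤ b ∧ b ω₀ = 1 ∧ ∀ ω, ω ∉ U → b ω = 0 := by
  obtain ⟨f, h1, h2, hc, h01⟩ := exists_continuous_one_zero_of_isCompact
    (isCompact_singleton (x := ω₀)) hU.isClosed_compl
    (by rw [Set.disjoint_singleton_left]; simpa using h)
  have hcs : HasCompactSupport (fun ω => (f ω : ℂ)) :=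
    hc.comp_left (g := fun x : ℝ => (x : ℂ)) (by simp)
  refine ⟨⟨⟨fun ω => (f ω : ℂ), by fun_prop⟩, hcs.is_zero_at_infty⟩, ?_, ?_, ?_⟩
  · intro ω
    change (0 : ℂ) ≤ (f ω : ℂ)
    exact_mod_cast (h01 ω).1
  · change (f ω₀ : ℂ) = 1
    rw [h1 rfl]; simp
  · intro ω hω
    change (f ω : ℂ) = 0
    rw [h2 hω]; simp

theorem norm_apply_le (f : C₀(X, ℂ)) (ω : X) : ‖f ω‖ ≤ ‖f‖ :=
  f.toBCF.norm_coe_le_norm ω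

theorem norm_le (f : C₀(X, ℂ)) (C : ℝ) (hC : 0 ≤ C) (h : ∀ ω, ‖f ω‖ ≤ C) : ‖f‖ ≤ C :=
  (BoundedContinuousFunction.norm_le (f := f.toBCF) hC).2 h

theorem mem_ideal (J : Set C₀(X, ℂ)) (hJ : IsIdeal J) (d : C₀(X, ℂ))
    (hd : ∀ ω, d ω ≠ 0 → ∃ j ∈ J, j ω ≠ 0) : d ∈ J := by
  obtain ⟨-, hcl, h0, hadd, -, hmul⟩ := hJ
  rw [← hcl.closure_eq, Metric.mem_closure_iff]
  intro ε hε
  have hK : IsCompact {ω | ε / 2 ≤ ‖d ω‖} := by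
    have h1 : Filter.Tendsto (fun ω => ‖d ω‖) (Filter.cocompact X) (nhds 0) := by
      simpa using (zero_at_infty d).norm
    have h2 := h1.eventually (gt_mem_nhds (half_pos hε))
    obtain ⟨t, ht, hts⟩ := Filter.mem_cocompact.1 h2
    refine ht.of_isClosed_subset (isClosed_le continuous_const (map_continuous d).norm) ?_
    intro ω hω
    by_contra hc
    have h3 : ‖d ω‖ < ε / 2 := hts hc
    exact absurd h3 (not_lt.2 hω)
  have key : ∃ h ∈ J, ∃ δ : ℝ, 0 < δ ∧ ∃ r : X → ℝ, (∀ ω, h ω = r ω) ∧ (∀ ω, 0 ≤ r ω) ∧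
      ∀ ω ∈ {ω | ε / 2 ≤ ‖d ω‖}, δ ≤ r ω := by
    refine hK.induction_on (p := fun s => ∃ h ∈ J, ∃ δ : ℝ, 0 < δ ∧ ∃ r : X → ℝ,
      (∀ ω, h ω = r ω) ∧ (∀ ω, 0 ≤ r ω) ∧ ∀ ω ∈ s, δ ≤ r ω) ?_ ?_ ?_ ?_
    · exact ⟨0, h0, 1, one_pos, fun _ => 0, by simp, by simp, by simp⟩
    · rintro s t hst ⟨h, hh, δ, hδ, r, h1, h2, h3⟩
      exact ⟨h, hh, δ, hδ, r, h1, h2, fun ω hω => h3 ω (hst hω)⟩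
    · rintro s t ⟨h, hh, δ, hδ, r, h1, h2, h3⟩ ⟨h', hh', δ', hδ', r', h1', h2', h3'⟩
      refine ⟨h + h', hadd _ hh _ hh', min δ δ', lt_min hδ hδ', fun ω => r ω + r' ω,
        ?_, ?_, ?_⟩
      · intro ω; simp [h1, h1']
      · intro ω; exact add_nonneg (h2 ω) (h2' ω)
      · rintro ω (hω | hω)
        · have := h3 ω hω; have := h2' ω; have := min_le_left δ δ'; linarith
        · have := h3' ω hω; have := h2 ω; have := min_le_right δ δ'; linarith
    · intro ω hω
      have hdω : d ω ≠ 0 := by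
        rw [← norm_pos_iff]; exact lt_of_lt_of_le (half_pos hε) hω
      obtain ⟨j, hj, hjω⟩ := hd ω hdω
      have hp : 0 < ‖j ω‖ := norm_pos_iff.2 hjω
      refine ⟨{x | ‖j ω‖ / 2 < ‖j x‖}, mem_nhdsWithin_of_mem_nhds
        ((isOpen_lt continuous_const (map_continuous j).norm).mem_nhds (by
          change ‖j ω‖ / 2 < ‖j ω‖; linarith)), star j * j, (hmul j hj _ trivial).1,
        (‖j ω‖ / 2) ^ 2, by positivity, fun x => ‖j x‖ ^ 2, ?_, ?_, ?_⟩
      · intro x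
        simpa using Complex.conj_mul' (j x)
      · intro x; positivity
      · intro x hx
        have : ‖j ω‖ / 2 < ‖j x‖ := hx
        change (‖j ω‖ / 2) ^ 2 ≤ ‖j x‖ ^ 2
        gcongr
  obtain ⟨h, hh, δ, hδ, r, h1, h2, h3⟩ := key
  have hr : Continuous r := by
    have : r = fun ω => (h ω).re := by ext ω; simp [h1]
    rw [this]; exact Complex.continuous_re.comp (map_continuous h)
  have hm : ∀ ω, 0 < max (r ω) δ := fun ω => lt_max_of_lt_right hδ
  obtain ⟨c, hc⟩ := exists_mk d (fun ω => d ω * ((1 / max (r ω) δ : ℝ) : ℂ))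
    (by
      refine (map_continuous d).mul (Complex.continuous_ofReal.comp ?_)
      exact continuous_const.div (hr.max continuous_const) fun ω => (hm ω).ne')
    (fun t => t * (1 / δ)) (by fun_prop) (by simp) (by
      intro ω
      rw [norm_mul, Complex.norm_real, Real.norm_of_nonneg (by have := hm ω; positivity)]
      gcongr
      exact le_max_right _ _)
  refine ⟨c * h, (hmul h hh c trivial).1, ?_⟩
  rw [dist_eq_norm]
  refine lt_of_le_of_lt (norm_le _ (ε / 2) (half_pos hε).le ?_) (half_lt_self hε)
  intro ω
  have e : (d - c * h) ω = d ω * ((1 - r ω / max (r ω) δ : ℝ) : ℂ) := by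
    simp only [ZeroAtInftyContinuousMap.sub_apply, ZeroAtInftyContinuousMap.mul_apply, hc, h1]
    push_cast; ring
  have q0 : 0 ≤ r ω / max (r ω) δ := div_nonneg (h2 ω) (hm ω).le
  have q1 : r ω / max (r ω) δ ≤ 1 := (div_le_one (hm ω)).2 (le_max_left _ _)
  rw [e, norm_mul, Complex.norm_real, Real.norm_of_nonneg (by linarith)]
  by_cases hω : ε / 2 ≤ ‖d ω‖
  · rw [max_eq_left (h3 ω hω), div_self (lt_of_lt_of_le hδ (h3 ω hω)).ne']
    simp; positivity
  · have := norm_nonneg (d ω)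
    nlinarith

/-- The functions vanishing on `K` form an ideal. -/
theorem isIdeal_vanish (K : Set X) : IsIdeal {f : C₀(X, ℂ) | ∀ ω ∈ K, f ω = 0} := by
  refine ⟨Set.subset_univ _, ?_, ?_, ?_, ?_, ?_⟩
  · refine isClosed_of_closure_subset ?_
    intro f hf ω hω
    rw [Metric.mem_closure_iff] at hf
    rw [← norm_le_zero_iff]
    refine le_of_forall_pos_le_add fun ε hε => ?_
    obtain ⟨g, hg, hfg⟩ := hf ε hε
    rw [dist_eq_norm] at hfg
    have := norm_apply_le (f - g) ω
    rw [ZeroAtInftyContinuousMap.sub_apply, hg ω hω, sub_zero] at this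
    linarith
  · intro ω _; rfl
  · intro x hx y hy ω hω
    simp [hx ω hω, hy ω hω]
  · intro c x hx ω hω
    simp [hx ω hω]
  · intro x hx c _
    exact ⟨fun ω hω => by simp [hx ω hω], fun ω hω => by simp [hx ω hω]⟩

theorem isHereditary_vanish [LocallyCompactSpace X] [T2Space X] (K : Set X) :
    IsHereditary {f : C₀(X, ℂ) | ∀ ω ∈ K, f ω = 0} := by
  obtain ⟨-, h1, h2, h3, h4, h5⟩ := isIdeal_vanish K
  refine ⟨⟨h1, h2, h3, h4, fun x _ y hy => (h5 y hy x trivial).1, ?_⟩, ?_⟩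
  · intro x hx ω hω
    simp [hx ω hω]
  · intro b d hd hb hbd ω hω
    refine le_antisymm ?_ (hb ω)
    rw [← hd ω hω]
    exact hbd ω

theorem pos_real [LocallyCompactSpace X] [T2Space X] (a : C₀(X, ℂ)) (ha : 0 ≤ a) :
    ∃ r : X → ℝ, Continuous r ∧ (∀ ω, a ω = r ω) ∧ ∀ ω, 0 ≤ r ω := by
  have h : ∀ ω, (0 : ℂ) ≤ a ω := ha
  refine ⟨fun ω => (a ω).re, Complex.continuous_re.comp (map_continuous a), ?_, ?_⟩
  · intro ω
    have := (Complex.le_def.1 (h ω)).2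
    apply Complex.ext <;> simp_all
  · intro ω
    exact (Complex.le_def.1 (h ω)).1

end KMaux

open KMaux

/-- For `B = C₀(Ω)` and a set `F` of nonnegative functions in `B`, the following are
equivalent: `F` fills `B`; `F` residually supports `B`; the open supports of the elements
of `F` form a basis for the topology of `Ω`. -/
theorem stmt10 (F : Set C₀(Ω, ℂ)) (hF : ∀ a ∈ F, 0 ≤ a) :
    List.TFAE [Fills F, ResiduallySupports F,
      TopologicalSpace.IsTopologicalBasis
        ((fun a : C₀(Ω, ℂ) => {ω : Ω | 0 < a ω}) '' F)] := by
  have hset : ∀ a : C₀(Ω, ℂ), ∀ r : Ω → ℝ, (∀ ω, a ω = r ω) →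
      {ω : Ω | 0 < a ω} = {ω | 0 < r ω} := by
    intro a r h
    ext ω
    simp [h]
  have hopen : ∀ u ∈ ((fun a : C₀(Ω, ℂ) => {ω : Ω | 0 < a ω}) '' F), IsOpen u := by
    rintro _ ⟨a, ha, rfl⟩
    obtain ⟨r, hr, har, -⟩ := pos_real a (hF a ha)
    change IsOpen {ω : Ω | 0 < a ω}
    rw [hset a r har]
    exact isOpen_lt continuous_const hr
  tfae_have 1 → 3 := by
    intro h
    refine TopologicalSpace.isTopologicalBasis_of_isOpen_of_nhds hopen ?_
    intro ω₀ U hω hU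
    obtain ⟨b, -, hb1, hb0⟩ := exists_bump U hU ω₀ hω
    obtain ⟨z, hzJ, hzD, hzF⟩ := h {f | ∀ ω ∈ Uᶜ, f ω = 0} (isHereditary_vanish _)
      ⟨b, hb0, fun h0 => by simp [h0] at hb1⟩ {f | ∀ ω ∈ ({ω₀} : Set Ω), f ω = 0}
      (isIdeal_vanish _) (fun hsub => by
        have := hsub (show b ∈ _ from hb0) ω₀ rfl
        rw [hb1] at this; exact one_ne_zero this)
    have hz0 : z ω₀ ≠ 0 := fun h0 => hzJ (by rintro ω rfl; exact h0)
    have hval : ∀ ω, (star z * z) ω = ((‖z ω‖ ^ 2 : ℝ) : ℂ) := by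
      intro x
      simpa using Complex.conj_mul' (z x)
    refine ⟨_, ⟨_, hzF, rfl⟩, ?_, ?_⟩
    · change ω₀ ∈ {ω : Ω | 0 < (star z * z) ω}
      rw [hset _ _ hval]
      have := norm_pos_iff.2 hz0
      change 0 < ‖z ω₀‖ ^ 2
      positivity
    · change {ω : Ω | 0 < (star z * z) ω} ⊆ U
      intro ω hω
      by_contra hc
      have h1 := hzD ω hc
      rw [mul_comm] at h1
      change 0 < (star z * z) ω at hω
      rw [h1] at hω
      exact lt_irrefl _ hω
  tfae_have 2 → 3 := by
    intro h
    refine TopologicalSpace.isTopologicalBasis_of_isOpen_of_nhds hopen ?_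
    intro ω₀ U hω hU
    obtain ⟨b, hbp, hb1, hb0⟩ := exists_bump U hU ω₀ hω
    obtain ⟨a, haF, haJ, hx⟩ := h {f | ∀ ω ∈ insert ω₀ Uᶜ, f ω = 0} (isIdeal_vanish _) b trivial
      hbp (fun hb => by
        have := hb ω₀ (Set.mem_insert _ _)
        rw [hb1] at this; exact one_ne_zero this)
    have hav : ∀ ω, ω ∉ U → a ω = 0 := by
      intro ω hω
      rw [← norm_le_zero_iff]
      refine le_of_forall_pos_le_add fun ε hε => ?_
      obtain ⟨x, -, hx⟩ := hx ε hε
      obtain ⟨j, hj, hd⟩ := (Metric.infDist_lt_iff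
        (s := {f : C₀(Ω, ℂ) | ∀ ω ∈ insert ω₀ Uᶜ, f ω = 0}) ⟨0, fun _ _ => rfl⟩).1 hx
      rw [dist_eq_norm] at hd
      have := norm_apply_le (a - star x * b * x - j) ω
      have hjω := hj ω (Set.mem_insert_of_mem _ hω)
      simp [hjω, hb0 ω hω] at this
      linarith
    have ha0 : a ω₀ ≠ 0 := by
      intro h0
      apply haJ
      rintro ω (rfl | hω)
      · exact h0
      · exact hav ω hω
    refine ⟨_, ⟨a, haF, rfl⟩, lt_of_le_of_ne (hF a haF ω₀) (Ne.symm ha0), ?_⟩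
    intro ω hω
    by_contra hc
    change 0 < a ω at hω
    rw [hav ω hc] at hω
    exact lt_irrefl _ hω
  -- a common construction for the two remaining implications
  have main : TopologicalSpace.IsTopologicalBasis
        ((fun a : C₀(Ω, ℂ) => {ω : Ω | 0 < a ω}) '' F) → ∀ J : Set C₀(Ω, ℂ), IsIdeal J →
      ∀ d : C₀(Ω, ℂ), d ∉ J → ∃ a ∈ F, ∃ ω₀, a ω₀ ≠ 0 ∧ (∀ j ∈ J, j ω₀ = 0) ∧
        ∃ c : ℝ, 0 < c ∧ ∀ ω, a ω ≠ 0 → c < ‖d ω‖ := by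
    intro hB J hJ d hd
    have : ∃ ω, d ω ≠ 0 ∧ ∀ j ∈ J, j ω = 0 := by
      by_contra hc
      push Not at hc
      exact hd (mem_ideal J hJ d hc)
    obtain ⟨ω₀, hω, hj⟩ := this
    have hp := norm_pos_iff.2 hω
    obtain ⟨_, ⟨a, haF, rfl⟩, hmem, hsub⟩ := hB.exists_subset_of_mem_open
      (show ω₀ ∈ {ω | ‖d ω₀‖ / 2 < ‖d ω‖} from half_lt_self hp)
      (isOpen_lt continuous_const (map_continuous d).norm)
    exact ⟨a, haF, ω₀, (ne_of_gt hmem), hj, ‖d ω₀‖ / 2, half_pos hp, fun ω h0 =>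
      hsub (lt_of_le_of_ne (hF a haF ω) (Ne.symm h0))⟩
  tfae_have 3 → 1 := by
    intro hB D hD _ J hJ hDJ
    obtain ⟨d, hdD, hdJ⟩ := Set.not_subset.1 hDJ
    obtain ⟨a, haF, ω₀, ha0, hj, c, hc, hac⟩ := main hB J hJ d hdJ
    obtain ⟨r, hr, har, hr0⟩ := pos_real a (hF a haF)
    obtain ⟨z, hz⟩ := exists_mk a (fun ω => ((Real.sqrt (r ω) : ℝ) : ℂ)) (by fun_prop)
      Real.sqrt Real.continuous_sqrt Real.sqrt_zero (by
        intro ω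
        rw [har, Complex.norm_real, Complex.norm_real, Real.norm_of_nonneg (hr0 ω),
          Real.norm_of_nonneg (Real.sqrt_nonneg _)])
    have hza : star z * z = a := by
      ext ω
      have : (star z * z) ω = star (z ω) * z ω := rfl
      rw [this, hz, har]
      simp only [Complex.star_def, Complex.conj_ofReal]
      rw [← Complex.ofReal_mul, Real.mul_self_sqrt (hr0 ω)]
    refine ⟨z, ?_, ?_, by rwa [hza]⟩
    · intro hzJ
      apply ha0
      rw [← hza]
      have : (star z * z) ω₀ = star (z ω₀) * z ω₀ := rfl
      rw [this, hj z hzJ, mul_zero]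
    · rw [mul_comm, hza]
      obtain ⟨⟨-, -, -, hsm, hmu, hst⟩, hher⟩ := hD
      refine hher a (((‖a‖ / c ^ 2 : ℝ) : ℂ) • (star d * d))
        (hsm _ _ (hmu _ (hst _ hdD) _ hdD)) (hF a haF) ?_
      intro ω
      have e : (((‖a‖ / c ^ 2 : ℝ) : ℂ) • (star d * d)) ω = ((‖a‖ / c ^ 2 * ‖d ω‖ ^ 2 : ℝ) : ℂ) := by
        have : (star d * d) ω = ((‖d ω‖ ^ 2 : ℝ) : ℂ) := by
          simpa using Complex.conj_mul' (d ω)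
        rw [ZeroAtInftyContinuousMap.smul_apply, this, smul_eq_mul, ← Complex.ofReal_mul]
      rw [e, har, Complex.real_le_real]
      by_cases h0 : a ω = 0
      · have : r ω = 0 := by have := har ω; rw [h0] at this; exact_mod_cast this.symm
        rw [this]; positivity
      · have h1 := hac ω h0
        have h2 : r ω ≤ ‖a‖ := by
          have := norm_apply_le a ω
          rwa [har, Complex.norm_real, Real.norm_of_nonneg (hr0 ω)] at this
        have h3 : c ^ 2 ≤ ‖d ω‖ ^ 2 := by gcongr
        calc r ω ≤ ‖a‖ := h2
          _ = ‖a‖ / c ^ 2 * c ^ 2 := by field_simp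
          _ ≤ _ := by gcongr
  tfae_have 3 → 2 := by
    intro hB J hJ b _ hb hbJ
    obtain ⟨a, haF, ω₀, ha0, hj, c, hc, hac⟩ := main hB J hJ b hbJ
    obtain ⟨r, hr, har, hr0⟩ := pos_real a (hF a haF)
    obtain ⟨s, hs, hbs, hs0⟩ := pos_real b hb
    refine ⟨a, haF, fun h => ha0 (hj a h), fun ε hε => ?_⟩
    have hm : ∀ ω, 0 < max (s ω) c := fun ω => lt_max_of_lt_right hc
    obtain ⟨z, hz⟩ := exists_mk a (fun ω => ((Real.sqrt (r ω / max (s ω) c) : ℝ) : ℂ))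
      (Complex.continuous_ofReal.comp (Real.continuous_sqrt.comp
        (hr.div (hs.max continuous_const) fun ω => (hm ω).ne')))
      (fun t => Real.sqrt (t / c)) (by fun_prop) (by simp) (by
        intro ω
        rw [har, Complex.norm_real, Complex.norm_real, Real.norm_of_nonneg (hr0 ω),
          Real.norm_of_nonneg (Real.sqrt_nonneg _)]
        apply Real.sqrt_le_sqrt
        exact div_le_div_of_nonneg_left (hr0 ω) hc (le_max_right _ _))
    refine ⟨z, trivial, ?_⟩
    have hza : star z * b * z = a := by
      ext ω
      have : (star z * b * z) ω = star (z ω) * b ω * z ω := rfl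
      rw [this, hz, har, hbs]
      simp only [Complex.star_def, Complex.conj_ofReal]
      rw [← Complex.ofReal_mul, ← Complex.ofReal_mul, mul_right_comm,
        Real.mul_self_sqrt (div_nonneg (hr0 ω) (hm ω).le)]
      congr 1
      by_cases h0 : a ω = 0
      · have : r ω = 0 := by have := har ω; rw [h0] at this; exact_mod_cast this.symm
        simp [this]
      · have h1 := hac ω h0
        rw [hbs, Complex.norm_real, Real.norm_of_nonneg (hs0 ω)] at h1
        rw [max_eq_left h1.le]
        have : s ω ≠ 0 := (hc.trans h1).ne'
        field_simp
    rw [hza, sub_self, Metric.infDist_zero_of_mem hJ.2.2.1]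
    exact hε
  tfae_finish
end

section
/- Let A ⊆ B be a symmetric C*-inclusion and let E : B → A be a bounded linear map with E(a) = a for all a ∈ A and E(a b c) = a E(b) c for all a, c ∈ A and b ∈ B (these properties hold in particular for any conditional expectation). Then for every restricted ideal I of A one has E(BIB) ⊆ I, hence E(BIB) = I; consequently E descends to a well-defined map B/BIB → A/I sending b + BIB to E(b) + I. -/
open KM

variable {B : Type*} [NonUnitalCStarAlgebra B] [PartialOrder B] [StarOrderedRing B]


/-- A closed subspace `I` closed under products and containing `x * star x` contains
left approximate units for `x`. -/
theorem KM.exists_left_unit {B : Type*} [NonUnitalCStarAlgebra B] (I : Set B)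
    (hcl : IsClosed I) (h0 : (0 : B) ∈ I) (hadd : ∀ x ∈ I, ∀ y ∈ I, x + y ∈ I)
    (hsmul : ∀ (c : ℂ), ∀ x ∈ I, c • x ∈ I) (hmul : ∀ x ∈ I, ∀ y ∈ I, x * y ∈ I)
    (x : B) (hx : x * star x ∈ I) (ε : ℝ) (hε : 0 < ε) :
    ∃ u ∈ I, ‖u * x - x‖ < ε := by
  let S : NonUnitalStarSubalgebra ℂ B :=
    { carrier := {y | y ∈ I ∧ star y ∈ I}
      add_mem' := by
        rintro a b ⟨ha, ha2⟩ ⟨hb, hb2⟩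
        exact ⟨hadd _ ha _ hb, by rw [star_add]; exact hadd _ ha2 _ hb2⟩
      zero_mem' := ⟨h0, by rw [star_zero]; exact h0⟩
      mul_mem' := by
        rintro a b ⟨ha, ha2⟩ ⟨hb, hb2⟩
        exact ⟨hmul _ ha _ hb, by rw [star_mul]; exact hmul _ hb2 _ ha2⟩
      smul_mem' := by
        rintro c a ⟨ha, ha2⟩
        exact ⟨hsmul _ _ ha, by rw [star_smul]; exact hsmul _ _ ha2⟩
      star_mem' := by
        rintro a ⟨ha, ha2⟩
        exact ⟨ha2, by rw [star_star]; exact ha⟩ }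
  have hScl : IsClosed (S : Set B) := by
    change IsClosed {y | y ∈ I ∧ star y ∈ I}
    exact hcl.inter (hcl.preimage continuous_star)
  have hxS : x * star x ∈ S := ⟨hx, by simpa using hx⟩
  have hle := NonUnitalStarAlgebra.elemental.le_of_mem hScl hxS
  set t := x * star x with ht
  letI : PartialOrder (NonUnitalStarAlgebra.elemental ℂ t) := CStarAlgebra.spectralOrder _
  haveI : StarOrderedRing (NonUnitalStarAlgebra.elemental ℂ t) :=
    CStarAlgebra.spectralOrderedRing _
  have hU := CStarAlgebra.increasingApproximateUnit (NonUnitalStarAlgebra.elemental ℂ t)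
  let t' : NonUnitalStarAlgebra.elemental ℂ t :=
    ⟨t, NonUnitalStarAlgebra.elemental.self_mem ℂ t⟩
  have h1 := (Metric.tendsto_nhds.1 (hU.tendsto_mul_right t')) (ε ^ 2 / 2) (by positivity)
  obtain ⟨u, hu1, hu2⟩ := (h1.and hU.eventually_norm).exists
  refine ⟨u, (hle u.2).1, ?_⟩
  have h2 : ‖(u : B) * t - t‖ < ε ^ 2 / 2 := by
    rw [dist_eq_norm] at hu1
    exact hu1
  have h3 : ‖(u : B)‖ ≤ 1 := hu2
  have h4 : ‖(u : B) * x - x‖ * ‖(u : B) * x - x‖ < ε ^ 2 := by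
    rw [← CStarRing.norm_self_mul_star]
    have : ((u : B) * x - x) * star ((u : B) * x - x)
        = ((u : B) * t - t) * star (u : B) - ((u : B) * t - t) := by
      simp only [ht, star_sub, star_mul, mul_sub, sub_mul, mul_assoc]
    rw [this]
    calc _ ≤ ‖((u : B) * t - t) * star (u : B)‖ + ‖(u : B) * t - t‖ := norm_sub_le _ _
      _ ≤ ‖(u : B) * t - t‖ * ‖star (u : B)‖ + ‖(u : B) * t - t‖ := by
        gcongr; exact norm_mul_le _ _
      _ ≤ ‖(u : B) * t - t‖ * 1 + ‖(u : B) * t - t‖ := by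
        gcongr; rw [norm_star]; exact h3
      _ < ε ^ 2 := by linarith
  nlinarith [norm_nonneg ((u : B) * x - x)]

/-- For a symmetric C*-inclusion `A ⊆ B` and a bounded linear map `E : B → A` restricting
to the identity on `A` and satisfying the `A`-bimodule property, for every restricted
ideal `I` one has `E(BIB) ⊆ I`, hence `E(BIB) = I`, and `E` descends to a well-defined map
`B/BIB → A/I`. -/
theorem stmt11 (A : Set B) (hA : IsSubCStar A) (hsym : SymmetricInclusion A)
    (E : B →L[ℂ] B)
    (hEmem : ∀ b : B, E b ∈ A)
    (hEid : ∀ a ∈ A, E a = a)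
    (hEbimod : ∀ a ∈ A, ∀ c ∈ A, ∀ b : B, E (a * b * c) = a * E b * c) :
    ∀ I : Set B, IsRestricted A I →
      (∀ b ∈ idealGen I, E b ∈ I) ∧ ((⇑E) '' idealGen I = I) ∧
        ∀ b b' : B, b - b' ∈ idealGen I → E b - E b' ∈ I := by
  rintro I ⟨J, ⟨-, hJc, hJ0, hJadd, hJsmul, hJmul⟩, rfl⟩
  have hs := hsym (J ∩ A) ⟨J, ⟨Set.subset_univ _, hJc, hJ0, hJadd, hJsmul, hJmul⟩, rfl⟩
  obtain ⟨hAc, hA0, hAadd, hAsmul, hAmul, hAstar⟩ := hA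
  set I := J ∩ A with hI
  have hIc : IsClosed I := hJc.inter hAc
  have hI0 : (0 : B) ∈ I := ⟨hJ0, hA0⟩
  have hIadd : ∀ x ∈ I, ∀ y ∈ I, x + y ∈ I :=
    fun x hx y hy => ⟨hJadd _ hx.1 _ hy.1, hAadd _ hx.2 _ hy.2⟩
  have hIsmul : ∀ (c : ℂ), ∀ x ∈ I, c • x ∈ I :=
    fun c x hx => ⟨hJsmul _ _ hx.1, hAsmul _ _ hx.2⟩
  have hIA : ∀ x ∈ I, ∀ a ∈ A, x * a ∈ I :=
    fun x hx a ha => ⟨(hJmul x hx.1 a trivial).2, hAmul _ hx.2 _ ha⟩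
  have hunit : ∀ x ∈ I, ∀ ε : ℝ, 0 < ε → ∃ u ∈ I, ‖u * x - x‖ < ε := fun x hx =>
    KM.exists_left_unit I hIc hI0 hIadd hIsmul (fun x hx y hy => hIA x hx y hy.2) x
      (hIA x hx _ (hAstar _ hx.2))
  -- `I` and its preimage under `E` as submodules
  let IM : Submodule ℂ B :=
    { carrier := I, add_mem' := fun {a b} ha hb => hIadd a ha b hb, zero_mem' := hI0,
      smul_mem' := fun c x hx => hIsmul c x hx }
  set L : Set B := {z : B | ∃ x ∈ I, ∃ b : B, z = x * b} with hL
  set R : Set B := {z : B | ∃ b : B, ∃ x ∈ I, z = b * x} with hR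
  let KL : Submodule ℂ B := (Submodule.span ℂ L).topologicalClosure
  let KR : Submodule ℂ B := (Submodule.span ℂ R).topologicalClosure
  have hKL : (KL : Set B) = closSpan L := rfl
  have hKR : (KR : Set B) = closSpan R := rfl
  have hLR : KL = KR := SetLike.coe_injective hs
  have hKLc : IsClosed (KL : Set B) := isClosed_closure
  have hKRc : IsClosed (KR : Set B) := isClosed_closure
  have hLmem : ∀ x ∈ I, ∀ b, x * b ∈ KL := fun x hx b =>
    subset_closure (Submodule.subset_span ⟨x, hx, b, rfl⟩)
  have hRmem : ∀ x ∈ I, ∀ b, b * x ∈ KR := fun x hx b =>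
    subset_closure (Submodule.subset_span ⟨b, x, hx, rfl⟩)
  have hIK : I ⊆ KL := by
    intro x hx
    rw [← hKLc.closure_eq, Metric.mem_closure_iff]
    intro ε hε
    obtain ⟨u, hu, h⟩ := hunit x hx ε hε
    exact ⟨u * x, hLmem u hu x, by rwa [dist_comm, dist_eq_norm]⟩
  have hKLmul : ∀ c : B, ∀ z ∈ KL, z * c ∈ KL := by
    intro c
    have : KL ≤ KL.comap (LinearMap.mulRight ℂ c) := by
      refine Submodule.topologicalClosure_minimal _ (Submodule.span_le.2 ?_) ?_
      · rintro _ ⟨x, hx, b, rfl⟩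
        change x * b * c ∈ KL
        rw [mul_assoc]
        exact hLmem x hx _
      · exact hKLc.preimage (continuous_id.mul continuous_const)
    exact fun z hz => this hz
  have hKRmul : ∀ c : B, ∀ z ∈ KR, c * z ∈ KR := by
    intro c
    have : KR ≤ KR.comap (LinearMap.mulLeft ℂ c) := by
      refine Submodule.topologicalClosure_minimal _ (Submodule.span_le.2 ?_) ?_
      · rintro _ ⟨b, x, hx, rfl⟩
        change c * (b * x) ∈ KR
        rw [← mul_assoc]
        exact hRmem x hx _
      · exact hKRc.preimage (continuous_const.mul continuous_id)
    exact fun z hz => this hz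
  have hgen : idealGen I ⊆ KL := by
    refine Set.sInter_subset_of_mem ⟨⟨Set.subset_univ _, hKLc, KL.zero_mem,
      fun x hx y hy => KL.add_mem hx hy, fun c x hx => KL.smul_mem c hx,
      fun x hx c _ => ⟨?_, hKLmul c x hx⟩⟩, hIK⟩
    rw [hLR] at hx ⊢
    exact hKRmul c x hx
  have hIgen : I ⊆ idealGen I := Set.subset_sInter fun _ h => h.2
  -- `E (u * z) ∈ I` for `u ∈ I`, `z` in the closed span of `B I`
  have hEu : ∀ u ∈ I, ∀ z ∈ KR, E (u * z) ∈ I := by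
    intro u hu
    have : KR ≤ IM.comap (E.toLinearMap ∘ₗ LinearMap.mulLeft ℂ u) := by
      refine Submodule.topologicalClosure_minimal _ (Submodule.span_le.2 ?_) ?_
      · rintro _ ⟨b, x, hx, rfl⟩
        change E (u * (b * x)) ∈ I
        rw [← mul_assoc, hEbimod u hu.2 x hx.2]
        exact hIA _ (hIA _ hu _ (hEmem b)) _ hx.2
      · exact hIc.preimage (E.continuous.comp (continuous_const.mul continuous_id))
    exact fun z hz => this hz
  have hEx : ∀ x ∈ I, ∀ b, E (x * b) ∈ I := by
    intro x hx b
    have hc : IsClosed {y : B | E (y * b) ∈ I} :=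
      hIc.preimage (E.continuous.comp (continuous_id.mul continuous_const))
    have : x ∈ closure {y : B | E (y * b) ∈ I} := by
      rw [Metric.mem_closure_iff]
      intro ε hε
      obtain ⟨u, hu, h⟩ := hunit x hx ε hε
      refine ⟨u * x, ?_, by rwa [dist_comm, dist_eq_norm]⟩
      change E (u * x * b) ∈ I
      rw [mul_assoc]
      exact hEu u hu _ (hLR ▸ hLmem x hx b)
    rwa [hc.closure_eq] at this
  have hEK : KL ≤ IM.comap E.toLinearMap := by
    refine Submodule.topologicalClosure_minimal _ (Submodule.span_le.2 ?_) ?_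
    · rintro _ ⟨x, hx, b, rfl⟩
      exact hEx x hx b
    · exact hIc.preimage E.continuous
  have hmain : ∀ b ∈ idealGen I, E b ∈ I := fun b hb => hEK (hgen hb)
  refine ⟨hmain, Set.Subset.antisymm ?_ ?_, ?_⟩
  · rintro _ ⟨b, hb, rfl⟩
    exact hmain b hb
  · exact fun x hx => ⟨x, hIgen hx, hEid x hx.2⟩
  · intro b b' h
    rw [← map_sub]
    exact hmain _ h
end

section
/- Every regular C*-inclusion A ⊆ B is symmetric: for every restricted ideal I of A, the closed linear span of {x b : x ∈ I, b ∈ B} equals the closed linear span of {b x : b ∈ B, x ∈ I}. -/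
open KM

variable {B : Type*} [NonUnitalCStarAlgebra B] [PartialOrder B] [StarOrderedRing B]


/-- Every `z` is approximated by `z * c * (star z * z)`. -/
theorem approx_aux (z : B) (ε : ℝ) (hε : 0 < ε) :
    ∃ c : B, ‖z - z * c * (star z * z)‖ ≤ ε := by
  set h := star z * z with hh
  have hsa : IsSelfAdjoint h := IsSelfAdjoint.star_mul_self z
  set δ : ℝ := ε ^ 4 with hδ
  have hδ0 : 0 < δ := by positivity
  have hden : ∀ t : ℝ, t ^ 2 + δ ≠ 0 := fun t => by positivity
  let k : ℝ → ℝ := fun t => t / (t ^ 2 + δ)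
  have hk : Continuous k := by
    apply Continuous.div <;> first | fun_prop | exact hden
  have hk0 : k 0 = 0 := by simp [k]
  set c := cfcₙ k h with hc
  have hcsa : star c = c := (cfcₙ_predicate k h).star_eq
  refine ⟨c, ?_⟩
  have hid : cfcₙ (fun t : ℝ => t) h = h := cfcₙ_id' ℝ h
  have hf : cfcₙ (fun t => k t * t) h = c * h := by
    rw [cfcₙ_mul k (fun t => t) h hk.continuousOn hk0, hid]
  have hhf : cfcₙ (fun t => t * (k t * t)) h = h * (c * h) := by
    rw [cfcₙ_mul (fun t => t) (fun t => k t * t) h (by fun_prop) rfl (by fun_prop) (by simp), hid, hf]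
  have hfh : cfcₙ (fun t => (k t * t) * t) h = c * h * h := by
    rw [cfcₙ_mul (fun t => k t * t) (fun t => t) h (by fun_prop) (by simp) (by fun_prop) rfl, hid, hf]
  have hcomm : star (c * h) = c * h := by
    rw [← hf]; exact (cfcₙ_predicate (fun t => k t * t) h).star_eq
  have hfhf : cfcₙ (fun t => (k t * t) * (t * (k t * t))) h = (c * h) * (h * (c * h)) := by
    rw [cfcₙ_mul (fun t => k t * t) (fun t => t * (k t * t)) h (by fun_prop) (by simp)
      (by fun_prop) (by simp), hhf, hf]
  have key : star (z - z * c * h) * (z - z * c * h) =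
      cfcₙ (fun t => (t - t * (k t * t)) - ((k t * t) * t - (k t * t) * (t * (k t * t)))) h := by
    rw [cfcₙ_sub (fun t => t - t * (k t * t)) (fun t => (k t * t) * t - (k t * t) * (t * (k t * t))) h
        (by fun_prop) (by simp) (by fun_prop) (by simp),
      cfcₙ_sub (fun t => t) (fun t => t * (k t * t)) h
        (by fun_prop) (by simp) (by fun_prop) (by simp),
      cfcₙ_sub (fun t => (k t * t) * t) (fun t => (k t * t) * (t * (k t * t))) h
        (by fun_prop) (by simp) (by fun_prop) (by simp), hid, hhf, hfh, hfhf]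
    rw [mul_assoc z c h, star_sub, star_mul z (c * h), hcomm, sub_mul, mul_sub, mul_sub]
    simp only [hh, mul_assoc]
  have hn : ‖z - z * c * h‖ * ‖z - z * c * h‖ ≤ ε ^ 2 := by
    rw [← CStarRing.norm_star_mul_self, key]
    apply norm_cfcₙ_le
    intro t _
    have e : (t - t * (k t * t)) - ((k t * t) * t - (k t * t) * (t * (k t * t)))
        = t * δ ^ 2 / (t ^ 2 + δ) ^ 2 := by
      have := hden t
      simp only [k]; field_simp; ring
    rw [e, Real.norm_eq_abs, abs_div, abs_mul, abs_of_pos (by positivity : 0 < δ ^ 2),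
      abs_of_pos (by positivity : 0 < (t ^ 2 + δ) ^ 2), div_le_iff₀ (by positivity)]
    have h1 : |t| * ε ^ 2 ≤ t ^ 2 + δ := by
      nlinarith [sq_nonneg (|t| - ε ^ 2), sq_abs t, sq_nonneg t]
    have h2 : δ ≤ t ^ 2 + δ := by nlinarith [sq_nonneg t]
    calc |t| * δ ^ 2 = ε ^ 2 * ((|t| * ε ^ 2) * δ) := by rw [hδ]; ring
      _ ≤ ε ^ 2 * ((t ^ 2 + δ) * (t ^ 2 + δ)) := by gcongr
      _ = _ := by ring
  nlinarith [norm_nonneg (z - z * c * h)]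

/-- Closed span induction in the form needed. -/
theorem closSpan_subset_aux {S : Set B} (M : Submodule ℂ B) (hM : IsClosed (M : Set B))
    (h : S ⊆ M) : closSpan S ⊆ M :=
  closure_minimal (Submodule.span_le.2 h) hM

/-- Every regular C*-inclusion is symmetric. -/
theorem stmt13 (A : Set B) (hA : IsSubCStar A) (hreg : RegularInclusion A) :
    SymmetricInclusion A := by
  rintro I ⟨J, ⟨-, -, -, -, -, hJ⟩, rfl⟩
  obtain ⟨-, -, -, -, hmul, hstar⟩ := hA
  obtain ⟨-, hN⟩ := hreg
  apply Set.Subset.antisymm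
  · set L := (Submodule.span ℂ {z : B | ∃ b : B, ∃ x ∈ J ∩ A, z = b * x}).topologicalClosure with hL
    change _ ⊆ (L : Set B)
    have hLc : IsClosed (L : Set B) := Submodule.isClosed_topologicalClosure _
    apply closSpan_subset_aux L hLc
    rintro _ ⟨x, hx, b, rfl⟩
    have hb : b ∈ closSpan {b : B | IsNormalizer A b} := hN ▸ Set.mem_univ b
    refine closSpan_subset_aux (L.comap (LinearMap.mulLeft ℂ x))
      (hLc.preimage (continuous_const_mul x)) ?_ hb
    intro n hn
    change x * n ∈ (L : Set B)
    rw [← hLc.closure_eq, Metric.mem_closure_iff]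
    intro ε hε
    obtain ⟨c, hc⟩ := approx_aux (x * n) (ε / 2) (by positivity)
    refine ⟨_, ?_, by rw [dist_eq_norm]; exact hc.trans_lt (by linarith)⟩
    refine Submodule.le_topologicalClosure _ (Submodule.subset_span ⟨_, _, ⟨?_, ?_⟩, rfl⟩)
    · rw [← mul_assoc]
      exact (hJ _ (hJ x hx.1 _ (Set.mem_univ _)).1 n (Set.mem_univ _)).2
    · have := hn.2 _ (hmul _ (hstar x hx.2) _ hx.2)
      simpa only [star_mul, mul_assoc] using this
  · set L := (Submodule.span ℂ {z : B | ∃ x ∈ J ∩ A, ∃ b : B, z = x * b}).topologicalClosure with hL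
    change _ ⊆ (L : Set B)
    have hLc : IsClosed (L : Set B) := Submodule.isClosed_topologicalClosure _
    apply closSpan_subset_aux L hLc
    rintro _ ⟨b, x, hx, rfl⟩
    have hb : b ∈ closSpan {b : B | IsNormalizer A b} := hN ▸ Set.mem_univ b
    refine closSpan_subset_aux (L.comap (LinearMap.mulRight ℂ x))
      (hLc.preimage (continuous_mul_const x)) ?_ hb
    intro n hn
    change n * x ∈ (L : Set B)
    rw [← hLc.closure_eq, Metric.mem_closure_iff]
    intro ε hε
    obtain ⟨c, hc⟩ := approx_aux (star (n * x)) (ε / 2) (by positivity)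
    rw [← norm_star, star_sub, star_star, star_mul, star_mul (star (n * x)) c, star_mul,
      star_star] at hc
    refine ⟨_, ?_, by rw [dist_eq_norm]; exact hc.trans_lt (by linarith)⟩
    refine Submodule.le_topologicalClosure _ (Submodule.subset_span ⟨_, ⟨?_, ?_⟩, _, rfl⟩)
    · rw [mul_assoc]
      exact (hJ _ (hJ x hx.1 _ (Set.mem_univ _)).2 n (Set.mem_univ _)).1
    · have := hn.1 _ (hmul _ hx.2 _ (hstar x hx.2))
      simpa only [star_mul, mul_assoc] using this
end

section
/- Let B be a C*-algebra and a ∈ B⁺ \ {0}. (1) Suppose there is b ∈ B⁺ \ {0} such that for every ε > 0 there are n, m ≥ 1 and elements a₁, …, a₍ₙ₊ₘ₎ ∈ aB with ‖a − Σ_{i=1}^{n} a_i* a_i‖ ≤ ε, ‖b − Σ_{i=n+1}^{n+m} a_i* a_i‖ ≤ ε, and Σ over all pairs i ≠ j of ‖a_i* a_j‖ ≤ ε. Then a is infinite in B. (2) If the same condition holds with b replaced by a (so both partial sums approximate a), then a is properly infinite in B. -/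
open KM

variable {B : Type*} [NonUnitalCStarAlgebra B] [PartialOrder B] [StarOrderedRing B]


theorem aux_memRightMul_sum (a : B) (f : ℕ → B) (s : Finset ℕ)
    (h : ∀ i ∈ s, MemRightMul a (f i)) : MemRightMul a (∑ i ∈ s, f i) := by
  choose! c hc using h
  exact ⟨∑ i ∈ s, c i, by rw [Finset.mul_sum]; exact Finset.sum_congr rfl hc⟩

theorem aux_diag (f : ℕ → B) (s t : Finset ℕ) (hst : s ⊆ t) :
    ‖star (∑ i ∈ s, f i) * (∑ i ∈ s, f i) - ∑ i ∈ s, star (f i) * f i‖ ≤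
      ∑ i ∈ t, ∑ j ∈ t, (if i = j then 0 else ‖star (f i) * f j‖) := by
  have h1 : star (∑ i ∈ s, f i) * (∑ i ∈ s, f i) - ∑ i ∈ s, star (f i) * f i =
      ∑ i ∈ s, ∑ j ∈ s, (if i = j then 0 else star (f i) * f j) := by
    rw [star_sum, Finset.sum_mul_sum, ← Finset.sum_sub_distrib]
    refine Finset.sum_congr rfl fun i hi => ?_
    rw [sub_eq_iff_eq_add]
    have h2 : star (f i) * f i = ∑ j ∈ s, (if i = j then star (f i) * f j else 0) := by
      simp [hi]
    rw [h2, ← Finset.sum_add_distrib]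
    refine Finset.sum_congr rfl fun j _ => ?_
    split_ifs <;> simp
  have hnn : ∀ i j, (0 : ℝ) ≤ (if i = j then 0 else ‖star (f i) * f j‖) := by
    intro i j
    split_ifs <;> positivity
  rw [h1]
  calc _ ≤ ∑ i ∈ s, ∑ j ∈ s, (if i = j then 0 else ‖star (f i) * f j‖) := by
        refine norm_sum_le_of_le _ fun i _ => norm_sum_le_of_le _ fun j _ => ?_
        split_ifs <;> simp
    _ ≤ ∑ i ∈ s, ∑ j ∈ t, (if i = j then 0 else ‖star (f i) * f j‖) :=
        Finset.sum_le_sum fun i _ =>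
          Finset.sum_le_sum_of_subset_of_nonneg hst fun j _ _ => hnn i j
    _ ≤ _ := Finset.sum_le_sum_of_subset_of_nonneg hst fun i _ _ =>
        Finset.sum_nonneg fun j _ => hnn i j

theorem aux_offdiag (f : ℕ → B) (s s' t : Finset ℕ) (hst : s ⊆ t) (hst' : s' ⊆ t)
    (hd : Disjoint s s') :
    ‖star (∑ i ∈ s, f i) * (∑ i ∈ s', f i)‖ ≤
      ∑ i ∈ t, ∑ j ∈ t, (if i = j then 0 else ‖star (f i) * f j‖) := by
  have hnn : ∀ i j, (0 : ℝ) ≤ (if i = j then 0 else ‖star (f i) * f j‖) := by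
    intro i j
    split_ifs <;> positivity
  rw [star_sum, Finset.sum_mul_sum]
  calc _ ≤ ∑ i ∈ s, ∑ j ∈ s', (if i = j then 0 else ‖star (f i) * f j‖) := by
        refine norm_sum_le_of_le _ fun i hi => norm_sum_le_of_le _ fun j hj => ?_
        rw [if_neg]
        rintro rfl
        exact Finset.disjoint_left.1 hd hi hj
    _ ≤ ∑ i ∈ s, ∑ j ∈ t, (if i = j then 0 else ‖star (f i) * f j‖) :=
        Finset.sum_le_sum fun i _ =>
          Finset.sum_le_sum_of_subset_of_nonneg hst' fun j _ _ => hnn i j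
    _ ≤ _ := Finset.sum_le_sum_of_subset_of_nonneg hst fun i _ _ =>
        Finset.sum_nonneg fun j _ => hnn i j

theorem aux_main (a b : B) (h : ∀ ε : ℝ, 0 < ε → ∃ n m : ℕ, 1 ≤ n ∧ 1 ≤ m ∧
        ∃ f : ℕ → B, (∀ i < n + m, MemRightMul a (f i)) ∧
          ‖a - ∑ i ∈ Finset.range n, star (f i) * f i‖ ≤ ε ∧
          ‖b - ∑ i ∈ Finset.Ico n (n + m), star (f i) * f i‖ ≤ ε ∧
          (∑ i ∈ Finset.range (n + m), ∑ j ∈ Finset.range (n + m),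
            (if i = j then 0 else ‖star (f i) * f j‖)) ≤ ε) (ε : ℝ) (hε : 0 < ε) :
    ∃ x y : B, MemRightMul a x ∧ MemRightMul a y ∧
    ‖star x * x - a‖ ≤ ε ∧ ‖star y * y - b‖ ≤ ε ∧ ‖star x * y‖ ≤ ε := by
  obtain ⟨n, m, -, -, f, hf, h1, h2, h3⟩ := h (ε / 2) (by positivity)
  have hs : Finset.range n ⊆ Finset.range (n + m) := by
    intro i hi
    simp only [Finset.mem_range] at *
    omega
  have hs' : Finset.Ico n (n + m) ⊆ Finset.range (n + m) := by
    intro i hi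
    simp only [Finset.mem_range, Finset.mem_Ico] at *
    omega
  have hd : Disjoint (Finset.range n) (Finset.Ico n (n + m)) := by
    rw [Finset.disjoint_left]
    intro i hi hi'
    simp only [Finset.mem_range, Finset.mem_Ico] at *
    omega
  refine ⟨∑ i ∈ Finset.range n, f i, ∑ i ∈ Finset.Ico n (n + m), f i,
    aux_memRightMul_sum a f _ fun i hi => hf i (Finset.mem_range.1 (hs hi)),
    aux_memRightMul_sum a f _ fun i hi => hf i (Finset.mem_range.1 (hs' hi)), ?_, ?_, ?_⟩
  · have := aux_diag f _ _ hs
    rw [norm_sub_rev] at h1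
    refine (norm_sub_le_norm_sub_add_norm_sub _
      (∑ i ∈ Finset.range n, star (f i) * f i) _).trans ?_
    linarith
  · have := aux_diag f _ _ hs'
    rw [norm_sub_rev] at h2
    refine (norm_sub_le_norm_sub_add_norm_sub _
      (∑ i ∈ Finset.Ico n (n + m), star (f i) * f i) _).trans ?_
    linarith
  · have := aux_offdiag f _ _ _ hs hs' hd
    linarith

/-- Sufficient conditions for infiniteness and proper infiniteness of a positive element
in terms of finite families `a_i ∈ aB` with almost orthogonal ranges. -/
theorem stmt15 (a : B) (ha : 0 ≤ a) (ha0 : a ≠ 0) :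
    ((∃ b : B, 0 ≤ b ∧ b ≠ 0 ∧ ∀ ε : ℝ, 0 < ε → ∃ n m : ℕ, 1 ≤ n ∧ 1 ≤ m ∧
        ∃ f : ℕ → B, (∀ i < n + m, MemRightMul a (f i)) ∧
          ‖a - ∑ i ∈ Finset.range n, star (f i) * f i‖ ≤ ε ∧
          ‖b - ∑ i ∈ Finset.Ico n (n + m), star (f i) * f i‖ ≤ ε ∧
          (∑ i ∈ Finset.range (n + m), ∑ j ∈ Finset.range (n + m),
            (if i = j then 0 else ‖star (f i) * f j‖)) ≤ ε) →
      InfiniteElt a) ∧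
    ((∀ ε : ℝ, 0 < ε → ∃ n m : ℕ, 1 ≤ n ∧ 1 ≤ m ∧
        ∃ f : ℕ → B, (∀ i < n + m, MemRightMul a (f i)) ∧
          ‖a - ∑ i ∈ Finset.range n, star (f i) * f i‖ ≤ ε ∧
          ‖a - ∑ i ∈ Finset.Ico n (n + m), star (f i) * f i‖ ≤ ε ∧
          (∑ i ∈ Finset.range (n + m), ∑ j ∈ Finset.range (n + m),
            (if i = j then 0 else ‖star (f i) * f j‖)) ≤ ε) →
      ProperlyInfinite a) := by
  
  exact ⟨fun ⟨b, hb, hb0, h⟩ => ⟨b, hb, hb0, aux_main a b h⟩, fun h => aux_main a a h⟩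
end

section
/- Let B be a C*-algebra, T an index set and (E_t)_{t∈T} a family of closed linear subspaces of B whose linear span is dense in B. Then an element a ∈ B⁺ \ {0} is properly infinite in B if and only if for every ε > 0 there are n, m ≥ 1, indices t₁, …, t₍ₙ₊ₘ₎ ∈ T and elements a_i ∈ a·E_{t_i} (for 1 ≤ i ≤ n+m) such that ‖a − Σ_{i,j=1}^{n} a_i* a_j‖ ≤ ε, ‖a − Σ_{i,j=n+1}^{n+m} a_i* a_j‖ ≤ ε, and ‖Σ_{i=1}^{n} Σ_{j=n+1}^{n+m} a_i* a_j‖ ≤ ε. -/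
open KM

variable {B : Type*} [NonUnitalCStarAlgebra B] [PartialOrder B] [StarOrderedRing B]


theorem stmt16_aux {B : Type*} [NonUnitalCStarAlgebra B] {T : Type*} [Nonempty T]
    (E : T → Submodule ℂ B) (w : B)
    (hw : w ∈ Submodule.span ℂ (⋃ t, (E t : Set B))) :
    ∃ n : ℕ, 1 ≤ n ∧ ∃ t : ℕ → T, ∃ c : ℕ → B, (∀ i < n, c i ∈ E (t i)) ∧
      w = ∑ i ∈ Finset.range n, c i := by
  induction hw using Submodule.span_induction with
  | mem x hx =>
    obtain ⟨t, ht⟩ := Set.mem_iUnion.1 hx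
    exact ⟨1, le_rfl, fun _ => t, fun _ => x, fun _ _ => ht, by simp⟩
  | zero =>
    exact ⟨1, le_rfl, fun _ => Classical.arbitrary T, fun _ => 0,
      fun _ _ => Submodule.zero_mem _, by simp⟩
  | add x y _ _ hx hy =>
    obtain ⟨n, hn, t, c, hc, rfl⟩ := hx
    obtain ⟨m, hm, s, d, hd, rfl⟩ := hy
    refine ⟨n + m, by omega, fun i => if i < n then t i else s (i - n),
      fun i => if i < n then c i else d (i - n), ?_, ?_⟩
    · intro i hi
      by_cases h : i < n
      · simpa [h] using hc i h
      · simpa [h] using hd (i - n) (by omega)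
    · rw [Finset.sum_range_add]
      congr 1
      · exact Finset.sum_congr rfl fun i hi => by simp [Finset.mem_range.1 hi]
      · exact Finset.sum_congr rfl fun i _ => by simp
  | smul r x _ hx =>
    obtain ⟨n, hn, t, c, hc, rfl⟩ := hx
    exact ⟨n, hn, t, fun i => r • c i, fun i hi => Submodule.smul_mem _ _ (hc i hi),
      by rw [Finset.smul_sum]⟩

/-- If `(E t)` is a family of closed subspaces of `B` with dense linear span, then a
nonzero positive `a` is properly infinite in `B` iff it satisfies the approximate
paradoxicality condition with elements from the subspaces `a·E t`. -/
theorem stmt16 {T : Type*} (E : T → Submodule ℂ B)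
    (hclosed : ∀ t, IsClosed (E t : Set B))
    (hdense : Dense (↑(Submodule.span ℂ (⋃ t, (E t : Set B))) : Set B))
    (a : B) (ha : 0 ≤ a) (ha0 : a ≠ 0) :
    ProperlyInfinite a ↔
      ∀ ε : ℝ, 0 < ε → ∃ n m : ℕ, 1 ≤ n ∧ 1 ≤ m ∧ ∃ t : ℕ → T, ∃ f : ℕ → B,
        (∀ i < n + m, ∃ c ∈ E (t i), f i = a * c) ∧
        ‖a - ∑ i ∈ Finset.range n, ∑ j ∈ Finset.range n, star (f i) * f j‖ ≤ ε ∧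
        ‖a - ∑ i ∈ Finset.Ico n (n + m), ∑ j ∈ Finset.Ico n (n + m),
            star (f i) * f j‖ ≤ ε ∧
        ‖∑ i ∈ Finset.range n, ∑ j ∈ Finset.Ico n (n + m), star (f i) * f j‖ ≤ ε := by
  have key : ∀ (s u : Finset ℕ) (f : ℕ → B), ∑ i ∈ s, ∑ j ∈ u, star (f i) * f j
      = star (∑ i ∈ s, f i) * ∑ j ∈ u, f j := by
    intro s u f
    rw [star_sum, Finset.sum_mul_sum]
  simp only [key]
  constructor
  · intro h ε hε
    have hT : Nonempty T := by
      by_contra hT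
      rw [not_nonempty_iff] at hT
      have h1 : a ∈ closure (↑(Submodule.span ℂ (⋃ t, (E t : Set B))) : Set B) := hdense a
      simp at h1
      exact ha0 h1
    obtain ⟨x, y, ⟨c, rfl⟩, ⟨d, rfl⟩, h1, h2, h3⟩ := h (ε / 2) (by positivity)
    have ho : IsOpen {p : B × B | ‖star (a * p.1) * (a * p.1) - a‖ < ε ∧
        ‖star (a * p.2) * (a * p.2) - a‖ < ε ∧ ‖star (a * p.1) * (a * p.2)‖ < ε} := by
      simp only [Set.setOf_and]
      refine IsOpen.inter ?_ (IsOpen.inter ?_ ?_)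
      all_goals
        apply isOpen_lt
        all_goals fun_prop
    obtain ⟨⟨c', d'⟩, ⟨hc', hd'⟩, h4, h5, h6⟩ := (hdense.prod hdense).exists_mem_open ho
      ⟨(c, d), by dsimp; linarith, by dsimp; linarith, by dsimp; linarith⟩
    dsimp only at hc' hd' h4 h5 h6
    obtain ⟨n, hn, t, c, hc, rfl⟩ := stmt16_aux E c' hc'
    obtain ⟨m, hm, s, d, hd, rfl⟩ := stmt16_aux E d' hd'
    have e1 : ∑ i ∈ Finset.range n, (a * if i < n then c i else d (i - n))
        = a * ∑ i ∈ Finset.range n, c i := by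
      rw [Finset.mul_sum]
      exact Finset.sum_congr rfl fun i hi => by simp [Finset.mem_range.1 hi]
    have e2 : ∑ i ∈ Finset.Ico n (n + m), (a * if i < n then c i else d (i - n))
        = a * ∑ i ∈ Finset.range m, d i := by
      rw [Finset.mul_sum, Finset.sum_Ico_eq_sum_range, Nat.add_sub_cancel_left]
      exact Finset.sum_congr rfl fun i _ => by simp
    refine ⟨n, m, hn, hm, fun i => if i < n then t i else s (i - n),
      fun i => a * if i < n then c i else d (i - n), ?_, ?_⟩
    · intro i hi
      refine ⟨_, ?_, rfl⟩
      by_cases h : i < n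
      · simpa [h] using hc i h
      · simpa [h] using hd (i - n) (by omega)
    · rw [e1, e2, norm_sub_rev, norm_sub_rev a]
      exact ⟨h4.le, h5.le, h6.le⟩
  · intro h ε hε
    obtain ⟨n, m, hn, hm, t, f, hf, h1, h2, h3⟩ := h ε hε
    choose! c hc hfc using hf
    refine ⟨_, _, ⟨∑ i ∈ Finset.range n, c i, ?_⟩, ⟨∑ i ∈ Finset.Ico n (n + m), c i, ?_⟩,
      by rwa [norm_sub_rev], by rwa [norm_sub_rev], h3⟩
    · rw [Finset.mul_sum]
      exact Finset.sum_congr rfl fun i hi => hfc i (by have := Finset.mem_range.1 hi; omega)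
    · rw [Finset.mul_sum]
      exact Finset.sum_congr rfl fun i hi => hfc i (Finset.mem_Ico.1 hi).2
end

section
/- Let A ⊆ B be a regular C*-inclusion and let 𝒮(A,B) denote the set of all closed linear subspaces M of B such that A·M ⊆ M, M·A ⊆ M and every element of M is a normaliser of A. Define M·N as the closed linear span of {m n : m ∈ M, n ∈ N} and M* = {m* : m ∈ M}. Then 𝒮(A,B) is closed under these operations, the product is associative, A ∈ 𝒮(A,B), every M ∈ 𝒮(A,B) satisfies M·M*·M = M, and M* is the unique element X of 𝒮(A,B) with M·X·M = M and X·M·X = X (so 𝒮(A,B) is an inverse semigroup under these operations); moreover, the closed linear span of the union of all members of 𝒮(A,B) is B. -/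
open KM

variable {B : Type*} [NonUnitalCStarAlgebra B] [PartialOrder B] [StarOrderedRing B]

/-- `M` is a closed linear subspace of `B`. -/
def IsClosedSubspace (M : Set B) : Prop :=
  IsClosed M ∧ (0 : B) ∈ M ∧ (∀ x ∈ M, ∀ y ∈ M, x + y ∈ M) ∧
    ∀ (c : ℂ), ∀ x ∈ M, c • x ∈ M

/-- The product `M · N`: the closed linear span of `{m n : m ∈ M, n ∈ N}`. -/
def prodSet (M N : Set B) : Set B := closSpan {z : B | ∃ m ∈ M, ∃ n ∈ N, z = m * n}

/-- `M* = {m* : m ∈ M}`. -/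
def starSet (M : Set B) : Set B := {x : B | ∃ m ∈ M, x = star m}

/-- `𝒮(A, B)`: the set of all closed linear `A`-subbimodules of `B` consisting of
normalisers of `A`. -/
def SlashS (A : Set B) : Set (Set B) :=
  {M : Set B | IsClosedSubspace M ∧ (∀ a ∈ A, ∀ m ∈ M, a * m ∈ M) ∧
    (∀ m ∈ M, ∀ a ∈ A, m * a ∈ M) ∧ ∀ m ∈ M, IsNormalizer A m}

open Filter Topology

section helpers

set_option linter.unusedSectionVars false

lemma isub_closSpan (S : Set B) : IsClosedSubspace (closSpan S) := by
  have h : closSpan S = ((Submodule.span ℂ S).topologicalClosure : Set B) := rfl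
  rw [h]
  exact ⟨Submodule.isClosed_topologicalClosure _, Submodule.zero_mem _,
    fun x hx y hy => Submodule.add_mem _ hx hy, fun c x hx => Submodule.smul_mem _ c hx⟩

lemma subset_closSpan' (S : Set B) : S ⊆ closSpan S :=
  fun _ hx => subset_closure (Submodule.subset_span hx)

lemma closSpan_min {S Q : Set B} (hQ : IsClosedSubspace Q) (h : S ⊆ Q) : closSpan S ⊆ Q := by
  obtain ⟨h1, h2, h3, h4⟩ := hQ
  refine closure_minimal ?_ h1
  intro x hx
  induction hx using Submodule.span_induction with
  | mem x hx => exact h hx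
  | zero => exact h2
  | add x y _ _ hx hy => exact h3 x hx y hy
  | smul c x _ hx => exact h4 c x hx

lemma isub_right {Q : Set B} (hQ : IsClosedSubspace Q) (p : B) :
    IsClosedSubspace {x : B | x * p ∈ Q} := by
  obtain ⟨h1, h2, h3, h4⟩ := hQ
  refine ⟨h1.preimage (by fun_prop : Continuous fun x : B => x * p), ?_, ?_, ?_⟩
  · simpa using h2
  · intro x hx y hy
    simpa [add_mul] using h3 _ hx _ hy
  · intro c x hx
    simpa [smul_mul_assoc] using h4 c _ hx

lemma isub_left {Q : Set B} (hQ : IsClosedSubspace Q) (p : B) :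
    IsClosedSubspace {x : B | p * x ∈ Q} := by
  obtain ⟨h1, h2, h3, h4⟩ := hQ
  refine ⟨h1.preimage (by fun_prop : Continuous fun x : B => p * x), ?_, ?_, ?_⟩
  · simpa using h2
  · intro x hx y hy
    simpa [mul_add] using h3 _ hx _ hy
  · intro c x hx
    simpa [mul_smul_comm] using h4 c _ hx

lemma isub_star {Q : Set B} (hQ : IsClosedSubspace Q) :
    IsClosedSubspace {x : B | star x ∈ Q} := by
  obtain ⟨h1, h2, h3, h4⟩ := hQ
  refine ⟨h1.preimage (by fun_prop : Continuous fun x : B => star x), ?_, ?_, ?_⟩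
  · simpa using h2
  · intro x hx y hy
    simpa using h3 _ hx _ hy
  · intro c x hx
    simpa using h4 (star c) _ hx

lemma mem_starSet {M : Set B} {x : B} : x ∈ starSet M ↔ star x ∈ M := by
  constructor
  · rintro ⟨m, hm, rfl⟩
    simpa using hm
  · intro h
    exact ⟨star x, h, by simp⟩

lemma isub_sub {A : Set B} (hA : IsSubCStar A) : IsClosedSubspace A :=
  ⟨hA.1, hA.2.1, hA.2.2.1, hA.2.2.2.1⟩

lemma mul_mem_prod {M N : Set B} {m n : B} (hm : m ∈ M) (hn : n ∈ N) : m * n ∈ prodSet M N :=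
  subset_closSpan' _ ⟨m, hm, n, hn, rfl⟩

lemma prod_min {M N Q : Set B} (hQ : IsClosedSubspace Q) (h : ∀ m ∈ M, ∀ n ∈ N, m * n ∈ Q) :
    prodSet M N ⊆ Q := by
  refine closSpan_min hQ ?_
  rintro _ ⟨m, hm, n, hn, rfl⟩
  exact h m hm n hn

lemma isub_prod (M N : Set B) : IsClosedSubspace (prodSet M N) := isub_closSpan _

lemma prod_assoc' (M N P : Set B) : prodSet (prodSet M N) P = prodSet M (prodSet N P) := by
  apply Set.Subset.antisymm
  · refine prod_min (isub_prod _ _) fun x hx p hp => ?_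
    refine prod_min (isub_right (isub_prod M (prodSet N P)) p) (fun m hm n hn => ?_) hx
    show m * n * p ∈ prodSet M (prodSet N P)
    rw [mul_assoc]
    exact mul_mem_prod hm (mul_mem_prod hn hp)
  · refine prod_min (isub_prod _ _) fun m hm x hx => ?_
    refine prod_min (isub_left (isub_prod (prodSet M N) P) m) (fun n hn p hp => ?_) hx
    show m * (n * p) ∈ prodSet (prodSet M N) P
    rw [← mul_assoc]
    exact mul_mem_prod (mul_mem_prod hm hn) hp

lemma starSet_prod (M N : Set B) : starSet (prodSet M N) = prodSet (starSet N) (starSet M) := by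
  have key : ∀ M N : Set B, prodSet M N ⊆ {x | star x ∈ prodSet (starSet N) (starSet M)} := by
    intro M N
    refine prod_min (isub_star (isub_prod _ _)) fun m hm n hn => ?_
    show star (m * n) ∈ prodSet (starSet N) (starSet M)
    rw [star_mul]
    exact mul_mem_prod ⟨n, hn, rfl⟩ ⟨m, hm, rfl⟩
  have ss : ∀ M : Set B, starSet (starSet M) = M := by
    intro M; ext x; simp [mem_starSet]
  apply Set.Subset.antisymm
  · rintro _ ⟨x, hx, rfl⟩
    exact key _ _ hx
  · intro x hx
    have := key _ _ hx
    rw [ss, ss] at this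
    exact mem_starSet.2 this

lemma exists_au {J : Set B} (hJ : IsSubCStar J) : ∃ l : Filter B, l.NeBot ∧
    (∀ᶠ e in l, e ∈ J ∧ ‖e‖ ≤ 1 ∧ star e = e) ∧ ∀ a ∈ J, Tendsto (fun e => e * a) l (𝓝 a) := by
  obtain ⟨h1, h2, h3, h4, h5, h6⟩ := hJ
  let S : NonUnitalStarSubalgebra ℂ B :=
    { carrier := J
      add_mem' := fun {x y} hx hy => h3 x hx y hy
      zero_mem' := h2
      mul_mem' := fun {x y} hx hy => h5 x hx y hy
      smul_mem' := fun c {x} hx => h4 c x hx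
      star_mem' := fun {x} hx => h6 x hx }
  have hS : IsClosed (S : Set B) := h1
  haveI : CompleteSpace S := hS.completeSpace_coe
  letI : NonUnitalCStarAlgebra S := { }
  letI := CStarAlgebra.spectralOrder S
  haveI := CStarAlgebra.spectralOrderedRing S
  have au := CStarAlgebra.increasingApproximateUnit S
  refine ⟨(CStarAlgebra.approximateUnit S).map (Subtype.val), ?_, ?_, ?_⟩
  · haveI := au.neBot
    infer_instance
  · rw [eventually_map]
    filter_upwards [au.eventually_norm, au.eventually_star_eq] with e he he'
    exact ⟨e.2, he, congrArg Subtype.val he'⟩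
  · intro a ha
    rw [tendsto_map'_iff]
    exact (continuous_subtype_val.tendsto _).comp (au.tendsto_mul_right (⟨a, ha⟩ : S))

lemma au_left {J : Set B} (hJ : IsSubCStar J) {m : B} (hm : m * star m ∈ J) :
    m ∈ closure {x | ∃ e ∈ J, x = e * m} := by
  obtain ⟨l, hl, he, ht⟩ := exists_au hJ
  have h0 : Tendsto (fun e => e * m) l (𝓝 m) := by
    have h1 := (ht _ hm).sub_const (m * star m)
    rw [sub_self] at h1
    have h2 := h1.norm
    rw [norm_zero] at h2
    have h3 := (h2.const_mul 2).sqrt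
    simp only [mul_zero, Real.sqrt_zero] at h3
    rw [tendsto_iff_norm_sub_tendsto_zero]
    refine squeeze_zero' (Eventually.of_forall fun _ => norm_nonneg _) ?_ h3
    filter_upwards [he] with e ⟨_, hn, hs⟩
    apply Real.le_sqrt_of_sq_le
    rw [sq, ← CStarRing.norm_self_mul_star]
    have : (e * m - m) * star (e * m - m)
        = (e * (m * star m) - m * star m) * e - (e * (m * star m) - m * star m) := by
      simp only [star_sub, star_mul, hs]
      noncomm_ring
    rw [this]
    refine (norm_sub_le _ _).trans ?_
    have := (norm_mul_le (e * (m * star m) - m * star m) e).trans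
      (mul_le_mul_of_nonneg_left hn (norm_nonneg _))
    linarith
  refine mem_closure_of_tendsto h0 ?_
  filter_upwards [he] with e he
  exact ⟨e, he.1, rfl⟩

/-- an approximate unit of `A` converges on all of `B`. -/
lemma au_all {A : Set B} (hA : IsSubCStar A) (hnd : Nondegenerate A) : ∃ l : Filter B, l.NeBot ∧
    (∀ᶠ e in l, e ∈ A ∧ ‖e‖ ≤ 1 ∧ star e = e) ∧ ∀ b : B, Tendsto (fun e => e * b) l (𝓝 b) := by
  obtain ⟨l, hl, he, ht⟩ := exists_au hA
  refine ⟨l, hl, he, ?_⟩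
  have hQ : IsClosedSubspace {b : B | Tendsto (fun e => e * b) l (𝓝 b)} := by
    refine ⟨?_, ?_, ?_, ?_⟩
    · refine isClosed_of_closure_subset fun b hb => ?_
      show Tendsto _ _ _
      rw [Metric.tendsto_nhds]
      intro ε hε
      obtain ⟨c, hc, hbc⟩ := Metric.mem_closure_iff.1 hb (ε / 3) (by positivity)
      filter_upwards [he, (Metric.tendsto_nhds.1 hc) (ε / 3) (by positivity)] with e ⟨_, hn, _⟩ h2
      rw [dist_eq_norm] at *
      have h3 : ‖e * (b - c)‖ ≤ ‖b - c‖ := by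
        refine (norm_mul_le _ _).trans ?_
        nlinarith [norm_nonneg (b - c)]
      calc ‖e * b - b‖ = ‖e * (b - c) + (e * c - c) - (b - c)‖ := by
            congr 1; noncomm_ring
        _ ≤ ‖e * (b - c)‖ + ‖e * c - c‖ + ‖b - c‖ :=
            (norm_sub_le _ _).trans (by gcongr; exact norm_add_le _ _)
        _ < ε := by linarith
    · show Tendsto _ _ _
      simp
    · intro x hx y hy
      show Tendsto _ _ _
      simpa [mul_add] using Tendsto.add hx hy
    · intro c x hx
      show Tendsto _ _ _
      simpa [mul_smul_comm] using Tendsto.const_smul hx c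
  intro b
  have hb : b ∈ closSpan {z : B | ∃ a ∈ A, ∃ b : B, z = a * b} := by
    rw [hnd]; trivial
  refine closSpan_min hQ ?_ hb
  rintro _ ⟨a, ha, c, rfl⟩
  show Tendsto _ _ _
  simpa [mul_assoc] using (ht a ha).mul_const c

/-- Removing the middle factor. -/
lemma drop_mid {A : Set B} (hA : IsSubCStar A) (hnd : Nondegenerate A) {Q : Set B}
    (hQ : IsClosed Q) (x y : B) (h : ∀ a ∈ A, x * a * y ∈ Q) : x * y ∈ Q := by
  obtain ⟨l, hl, he, ht⟩ := au_all hA hnd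
  refine hQ.mem_of_tendsto ((ht y).const_mul x) ?_
  filter_upwards [he] with e he
  rw [← mul_assoc]
  exact h e he.1

/-- full normaliser property for pairs -/
def NormPair (A S : Set B) : Prop :=
  ∀ x ∈ S, ∀ y ∈ S, ∀ a ∈ A, x * a * star y ∈ A ∧ star x * a * y ∈ A

lemma normPair_closSpan {A S : Set B} (hA : IsClosedSubspace A) (h : NormPair A S) :
    NormPair A (closSpan S) := by
  intro x hx y hy a ha
  constructor
  · have h1 : ∀ y ∈ S, x * a * star y ∈ A := fun y hy =>
      closSpan_min (isub_right (isub_right hA (star y)) a) (fun x hx => (h x hx y hy a ha).1) hx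
    exact closSpan_min (isub_star (isub_left hA (x * a)))
      (fun y hy => show x * a * star y ∈ A from h1 y hy) hy
  · have h1 : ∀ y ∈ S, star x * a * y ∈ A := fun y hy =>
      closSpan_min (isub_star (isub_right (isub_right hA y) a))
        (fun x hx => (h x hx y hy a ha).2) hx
    exact closSpan_min (isub_left hA (star x * a)) (fun y hy => h1 y hy) hy

lemma polar1 (x y a : B) : x * a * star y = (1 / 4 : ℂ) •
    ((x + y) * a * star (x + y) + (-1 : ℂ) • ((x + (-1 : ℂ) • y) * a * star (x + (-1 : ℂ) • y))
    + Complex.I • ((x + Complex.I • y) * a * star (x + Complex.I • y))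
    + (-Complex.I) • ((x + (-Complex.I) • y) * a * star (x + (-Complex.I) • y))) := by
  simp only [star_add, star_smul, mul_add, add_mul, smul_mul_assoc, mul_smul_comm, smul_add,
    smul_smul, RCLike.star_def, map_neg, Complex.conj_I, map_one]
  match_scalars <;> ring_nf <;> simp <;> ring_nf <;> simp <;> norm_num

lemma normPair_of_norm {A M : Set B} (hA : IsClosedSubspace A) (hM : IsClosedSubspace M)
    (h : ∀ m ∈ M, IsNormalizer A m) : NormPair A M := by
  obtain ⟨_, _, ha, hs⟩ := hA
  obtain ⟨_, _, hma, hms⟩ := hM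
  intro x hx y hy a haA
  constructor
  · rw [polar1]
    have k : ∀ z ∈ M, z * a * star z ∈ A := fun z hz => (h z hz).1 a haA
    exact hs _ _ (ha _ (ha _ (ha _ (k _ (hma _ hx _ hy)) _
      (hs _ _ (k _ (hma _ hx _ (hms _ _ hy))))) _ (hs _ _ (k _ (hma _ hx _ (hms _ _ hy))))) _
      (hs _ _ (k _ (hma _ hx _ (hms _ _ hy)))))
  · have e : star x * a * y = star x * a * star (star y) := by simp
    have k : ∀ z, star z ∈ M → z * a * star z ∈ A := fun z hz => by
      simpa using (h _ hz).2 a haA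
    have ad : ∀ x y : B, star x ∈ M → star y ∈ M → star (x + y) ∈ M := fun x y hx hy => by
      rw [star_add]; exact hma _ hx _ hy
    have sm : ∀ (c : ℂ) (y : B), star y ∈ M → star (c • y) ∈ M := fun c y hy => by
      rw [star_smul]; exact hms _ _ hy
    have hx' : star (star x) ∈ M := by simpa using hx
    have hy' : star (star y) ∈ M := by simpa using hy
    rw [e, polar1]
    exact hs _ _ (ha _ (ha _ (ha _ (k _ (ad _ _ hx' hy')) _
      (hs _ _ (k _ (ad _ _ hx' (sm _ _ hy'))))) _ (hs _ _ (k _ (ad _ _ hx' (sm _ _ hy'))))) _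
      (hs _ _ (k _ (ad _ _ hx' (sm _ _ hy')))))

lemma NormPair.norm {A M : Set B} (h : NormPair A M) : ∀ m ∈ M, IsNormalizer A m :=
  fun m hm => ⟨fun a ha => (h m hm m hm a ha).1, fun a ha => (h m hm m hm a ha).2⟩

lemma slash_pair {A M : Set B} (hA : IsSubCStar A) (hM : M ∈ SlashS A) : NormPair A M :=
  normPair_of_norm (isub_sub hA) hM.1 hM.2.2.2

lemma slash_mk {A S : Set B} (hA : IsSubCStar A) (hl : ∀ a ∈ A, ∀ s ∈ S, a * s ∈ S)
    (hr : ∀ s ∈ S, ∀ a ∈ A, s * a ∈ S) (hn : NormPair A S) : closSpan S ∈ SlashS A := by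
  refine ⟨isub_closSpan S, fun a ha => ?_, fun m hm a ha => ?_,
    (normPair_closSpan (isub_sub hA) hn).norm⟩
  · exact closSpan_min (isub_left (isub_closSpan S) a)
      fun s hs => subset_closSpan' _ (hl a ha s hs)
  · exact closSpan_min (isub_right (isub_closSpan S) a)
      (fun s hs => subset_closSpan' _ (hr s hs a ha)) hm

lemma slash_prod {A M N : Set B} (hA : IsSubCStar A) (hM : M ∈ SlashS A) (hN : N ∈ SlashS A) :
    prodSet M N ∈ SlashS A := by
  refine slash_mk hA ?_ ?_ ?_
  · rintro a ha _ ⟨m, hm, n, hn, rfl⟩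
    exact ⟨a * m, hM.2.1 a ha m hm, n, hn, (mul_assoc _ _ _).symm⟩
  · rintro _ ⟨m, hm, n, hn, rfl⟩ a ha
    exact ⟨m, hm, n * a, hN.2.2.1 n hn a ha, mul_assoc _ _ _⟩
  · rintro _ ⟨m, hm, n, hn, rfl⟩ _ ⟨m', hm', n', hn', rfl⟩ a ha
    constructor
    · have := (slash_pair hA hM m hm m' hm' _ (slash_pair hA hN n hn n' hn' a ha).1).1
      simpa [mul_assoc] using this
    · have := (slash_pair hA hN n hn n' hn' _ (slash_pair hA hM m hm m' hm' a ha).2).2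
      simpa [mul_assoc] using this

lemma slash_star {A M : Set B} (hA : IsSubCStar A) (hM : M ∈ SlashS A) :
    starSet M ∈ SlashS A := by
  have e : starSet M = {x : B | star x ∈ M} := by ext x; exact mem_starSet
  have st := hA.2.2.2.2.2
  rw [e]
  refine ⟨isub_star hM.1, fun a ha m hm => ?_, fun m hm a ha => ?_, fun m hm => ?_⟩
  · show star (a * m) ∈ M
    rw [star_mul]
    exact hM.2.2.1 _ hm _ (st a ha)
  · show star (m * a) ∈ M
    rw [star_mul]
    exact hM.2.1 _ (st a ha) _ hm
  · have := hM.2.2.2 _ hm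
    exact ⟨fun a ha => by simpa using this.2 a ha, fun a ha => by simpa using this.1 a ha⟩

lemma slash_self {A : Set B} (hA : IsSubCStar A) : A ∈ SlashS A := by
  have hm := hA.2.2.2.2.1
  have hs := hA.2.2.2.2.2
  exact ⟨isub_sub hA, fun a ha m hm' => hm a ha m hm', fun m hm' a ha => hm m hm' a ha,
    fun m hm' => ⟨fun a ha => hm _ (hm _ hm' _ ha) _ (hs _ hm'),
      fun a ha => hm _ (hm _ (hs _ hm') _ ha) _ hm'⟩⟩

lemma mul_star_sub {A M : Set B} (hA : IsSubCStar A) (hnd : Nondegenerate A)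
    (hM : M ∈ SlashS A) : prodSet M (starSet M) ⊆ A := by
  refine prod_min (isub_sub hA) ?_
  rintro m hm _ ⟨n, hn, rfl⟩
  exact drop_mid hA hnd hA.1 _ _ fun a ha => (slash_pair hA hM m hm n hn a ha).1

lemma star_mul_sub {A M : Set B} (hA : IsSubCStar A) (hnd : Nondegenerate A)
    (hM : M ∈ SlashS A) : prodSet (starSet M) M ⊆ A := by
  refine prod_min (isub_sub hA) ?_
  rintro _ ⟨m, hm, rfl⟩ n hn
  exact drop_mid hA hnd hA.1 _ _ fun a ha => (slash_pair hA hM m hm n hn a ha).2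

lemma starSet_starSet (M : Set B) : starSet (starSet M) = M := by
  ext x; simp [mem_starSet]

lemma prod_self_sub {A M : Set B} (hA : IsSubCStar A) (hnd : Nondegenerate A)
    (hM : M ∈ SlashS A) : IsSubCStar (prodSet M (starSet M)) := by
  have hP := slash_prod hA hM (slash_star hA hM)
  obtain ⟨h1, h2, h3, h4⟩ := hP.1
  refine ⟨h1, h2, h3, h4, fun x hx y hy => hP.2.1 x (mul_star_sub hA hnd hM hx) y hy, ?_⟩
  intro x hx
  rw [← mem_starSet, starSet_prod, starSet_starSet]
  exact hx

lemma prod_triple {A M : Set B} (hA : IsSubCStar A) (hnd : Nondegenerate A)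
    (hM : M ∈ SlashS A) : prodSet (prodSet M (starSet M)) M = M := by
  apply Set.Subset.antisymm
  · exact prod_min hM.1 fun x hx m hm => hM.2.1 x (mul_star_sub hA hnd hM hx) m hm
  · intro m hm
    refine closure_minimal ?_ (isub_prod _ _).1
      (au_left (prod_self_sub hA hnd hM) (mul_mem_prod hm ⟨m, hm, rfl⟩))
    rintro _ ⟨e, he, rfl⟩
    exact mul_mem_prod he hm

lemma prod_mono {M N M' N' : Set B} (h : M ⊆ M') (h' : N ⊆ N') : prodSet M N ⊆ prodSet M' N' :=
  prod_min (isub_prod _ _) fun _ hm _ hn => mul_mem_prod (h hm) (h' hn)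

/-- idempotents are self-adjoint -/
lemma idem_star {A E : Set B} (hA : IsSubCStar A) (hnd : Nondegenerate A)
    (hE : E ∈ SlashS A) (hi : prodSet E E = E) : starSet E = E := by
  have hI : prodSet (starSet E) E ⊆ E := by
    have : prodSet (starSet E) E = prodSet (prodSet (starSet E) E) E := by
      rw [prod_assoc', hi]
    rw [this]
    exact prod_min hE.1 fun x hx m hm => hE.2.1 x (star_mul_sub hA hnd hE hx) m hm
  have hJ : prodSet E (starSet E) ⊆ E := by
    have : prodSet E (starSet E) = prodSet E (prodSet E (starSet E)) := by
      rw [← prod_assoc', hi]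
    rw [this]
    exact prod_min hE.1 fun m hm x hx => hE.2.2.1 m hm x (mul_star_sub hA hnd hE hx)
  have hI' : prodSet (starSet E) E ⊆ starSet E := by
    intro x hx
    rw [mem_starSet]
    apply hI
    rw [← mem_starSet, starSet_prod, starSet_starSet]
    exact hx
  have hEJ : E ⊆ prodSet E (starSet E) := by
    conv_lhs => rw [← prod_triple hA hnd hE, prod_assoc']
    exact prod_mono subset_rfl hI'
  have : E = prodSet E (starSet E) := Set.Subset.antisymm hEJ hJ
  rw [this, starSet_prod, starSet_starSet]

lemma uniq_sub {A M X : Set B} (hA : IsSubCStar A) (hnd : Nondegenerate A)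
    (hM : M ∈ SlashS A) (hX : X ∈ SlashS A)
    (h2 : prodSet (prodSet X M) X = X) : X ⊆ starSet M := by
  have hi : prodSet (prodSet X M) (prodSet X M) = prodSet X M := by
    rw [← prod_assoc', h2]
  have hs := idem_star hA hnd (slash_prod hA hX hM) hi
  rw [starSet_prod] at hs
  rw [← h2, ← hs, prod_assoc']
  have hM' := slash_star hA hM
  exact prod_min hM'.1 fun m hm x hx => hM'.2.2.1 m hm x (star_mul_sub hA hnd hX hx)

lemma norm_mem {A : Set B} (hA : IsSubCStar A) (hnd : Nondegenerate A) {b : B}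
    (hb : IsNormalizer A b) : b ∈ closSpan (⋃₀ SlashS A) := by
  have hm := hA.2.2.2.2.1
  have hs := hA.2.2.2.2.2
  let S : Set B := {z | ∃ a ∈ A, ∃ c ∈ A, z = a * b * c}
  have hS : closSpan S ∈ SlashS A := by
    refine slash_mk hA ?_ ?_ ?_
    · rintro x hx _ ⟨a, ha, c, hc, rfl⟩
      exact ⟨x * a, hm _ hx _ ha, c, hc, by simp [mul_assoc]⟩
    · rintro _ ⟨a, ha, c, hc, rfl⟩ x hx
      exact ⟨a, ha, c * x, hm _ hc _ hx, by simp [mul_assoc]⟩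
    · rintro _ ⟨a, ha, c, hc, rfl⟩ _ ⟨a', ha', c', hc', rfl⟩ d hd
      constructor
      · have := hm _ (hm _ ha _ (hb.1 _ (hm _ (hm _ hc _ hd) _ (hs _ hc')))) _ (hs _ ha')
        simpa [mul_assoc] using this
      · have := hm _ (hm _ (hs _ hc) _ (hb.2 _ (hm _ (hm _ (hs _ ha) _ hd) _ ha'))) _ hc'
        simpa [mul_assoc] using this
  obtain ⟨l, hl, he, ht⟩ := au_all hA hnd
  have hr : ∀ x : B, (∀ c ∈ A, x * c ∈ closSpan S) → x ∈ closSpan S := by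
    intro x hx
    refine (isub_closSpan S).1.mem_of_tendsto (f := fun e => x * e) (b := l) ?_ ?_
    · have := (ht (star x)).star
      rw [star_star] at this
      refine this.congr' ?_
      filter_upwards [he] with e he
      simp [he.2.2]
    · filter_upwards [he] with e he
      exact hx e he.1
  refine subset_closSpan' _ ⟨closSpan S, hS, ?_⟩
  refine (isub_closSpan S).1.mem_of_tendsto (ht b) ?_
  filter_upwards [he] with e he
  exact hr _ fun c hc => subset_closSpan' _ ⟨e, he.1, c, hc, rfl⟩

end helpers

/-- For a regular C*-inclusion `A ⊆ B`, the collection `𝒮(A, B)` of closed linear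
`A`-subbimodules consisting of normalisers is an inverse semigroup under `M · N` and
`M ↦ M*`, with unit `A`, and the closed linear span of its union is `B`. -/
theorem stmt18 (A : Set B) (hA : IsSubCStar A) (hreg : RegularInclusion A) :
    (∀ M ∈ SlashS A, ∀ N ∈ SlashS A, prodSet M N ∈ SlashS A) ∧
    (∀ M ∈ SlashS A, starSet M ∈ SlashS A) ∧
    (∀ M ∈ SlashS A, ∀ N ∈ SlashS A, ∀ P ∈ SlashS A,
      prodSet (prodSet M N) P = prodSet M (prodSet N P)) ∧
    (A ∈ SlashS A) ∧
    (∀ M ∈ SlashS A, prodSet (prodSet M (starSet M)) M = M) ∧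
    (∀ M ∈ SlashS A, ∀ X ∈ SlashS A,
      prodSet (prodSet M X) M = M → prodSet (prodSet X M) X = X → X = starSet M) ∧
    closSpan (⋃₀ SlashS A) = Set.univ := by
  have hnd := hreg.1
  refine ⟨fun M hM N hN => slash_prod hA hM hN, fun M hM => slash_star hA hM,
    fun M _ N _ P _ => prod_assoc' M N P, slash_self hA, fun M hM => prod_triple hA hnd hM,
    fun M hM X hX h1 h2 => ?_, ?_⟩
  · refine Set.Subset.antisymm (uniq_sub hA hnd hM hX h2) ?_
    intro x hx
    have := uniq_sub hA hnd hX hM h1 (mem_starSet.1 hx)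
    simpa [mem_starSet] using this
  · refine Set.eq_univ_of_univ_subset ?_
    rw [← hreg.2]
    exact closSpan_min (isub_closSpan _) fun b hb => norm_mem hA hnd hb
end
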